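/- Let p > 2 and let f(s) = s^{q-1} - s^{r-1} with p ≤ r < q, where additionally q < p* in the case R1 = 0. Then the set of non-constant radial solutions u of the Neumann problem on [R1,R2] with u(R1) > 1 is infinite, and the set of non-constant radial solutions with u(R1) < 1 is infinite. -/

import Mathlib

open Real Set Filter Topology

noncomputable def phip (p s : ℝ) : ℝ := |s| ^ (p - 2) * s

def Freg (f : ℝ → ℝ) : Prop :=
  ContinuousOn f (Ici 0) ∧ ContDiffOn ℝ 1 f (Ioi 0)

def Feq (f : ℝ → ℝ) : Prop :=
  f 0 = 0 ∧ f 1 = 0 ∧ (∀ s : ℝ, 0 < s → s < 1 → f s < 0) ∧ (∀ s : ℝ, 1 < s → 0 < f s)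

def Fzero (p : ℝ) (f : ℝ → ℝ) : Prop :=
  ∃ c : ℝ, ∀ᶠ s in 𝓝[>] (0:ℝ), c ≤ f s / s ^ (p - 1)

noncomputable def pstar (p : ℝ) (N : ℕ) : EReal :=
  if p < (N:ℝ) then (((N:ℝ) * p / ((N:ℝ) - p) : ℝ) : EReal) else ⊤

noncomputable def fstar (f : ℝ → ℝ) (s : ℝ) : ℝ := sSup (f '' Icc 1 s)

noncomputable def Fint (f : ℝ → ℝ) (s : ℝ) : ℝ := ∫ σ in (1:ℝ)..s, f σ

def Fsubl (p : ℝ) (f : ℝ → ℝ) : Prop :=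
  ∃ M : ℝ, 0 < M ∧ ∀ ε > 0, ∀ᶠ s in atTop, f s / s ^ (p - 1) ≤ M + ε

def FsubcWith (p : ℝ) (N : ℕ) (f : ℝ → ℝ) (η : ℝ) : Prop :=
  (∀ c : ℝ, ∃ᶠ s in atTop, c < f s / s ^ (p - 1)) ∧
  0 < η ∧ η < 1 ∧
  ∃ L : ℝ, (L : EReal) < pstar p N ∧
    ∀ᶠ s in atTop, fstar f s * s / Fint f (η * s) ≤ L

def Fsubc (p : ℝ) (N : ℕ) (f : ℝ → ℝ) : Prop := ∃ η : ℝ, FsubcWith p N f η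

/-- A radial solution of the Neumann problem on `[R1,R2]`. -/
def NeumannSol (p : ℝ) (N : ℕ) (R1 R2 : ℝ) (f u : ℝ → ℝ) : Prop :=
  (∀ x ∈ Icc R1 R2, DifferentiableAt ℝ u x) ∧
  ContinuousOn (deriv u) (Icc R1 R2) ∧
  (∀ x ∈ Icc R1 R2, 0 < u x) ∧
  deriv u R1 = 0 ∧ deriv u R2 = 0 ∧
  ContinuousOn (fun x => x ^ (N - 1) * phip p (deriv u x)) (Icc R1 R2) ∧
  ∀ x ∈ Ioc R1 R2,
    HasDerivAt (fun t => t ^ (N - 1) * phip p (deriv u t)) (-(x ^ (N - 1)) * f (u x)) x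

noncomputable def fhat (f : ℝ → ℝ) (s : ℝ) : ℝ := if 0 ≤ s then f s else 0

noncomputable def Fhat (f : ℝ → ℝ) (s : ℝ) : ℝ := ∫ σ in (1:ℝ)..s, fhat f σ

/-- A solution of the Cauchy problem with datum `d`, for the nonlinearity `g`. -/
def CauchySol (p : ℝ) (N : ℕ) (R1 R2 : ℝ) (g u : ℝ → ℝ) (d : ℝ) : Prop :=
  (∀ x ∈ Icc R1 R2, DifferentiableAt ℝ u x) ∧
  ContinuousOn (deriv u) (Icc R1 R2) ∧
  u R1 = d ∧ deriv u R1 = 0 ∧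
  ContinuousOn (fun x => x ^ (N - 1) * phip p (deriv u x)) (Icc R1 R2) ∧
  ∀ x ∈ Ioc R1 R2,
    HasDerivAt (fun t => t ^ (N - 1) * phip p (deriv u t)) (-(x ^ (N - 1)) * g (u x)) x

noncomputable def rOne (R1 R2 : ℝ) (u : ℝ → ℝ) : ℝ :=
  sSup {x | x ∈ Icc R1 R2 ∧ ∀ s ∈ Ico R1 x, 0 < u s}

noncomputable def rZero (R2 η d : ℝ) (u : ℝ → ℝ) : ℝ :=
  sSup {x | x ∈ Icc 0 R2 ∧ ∀ s ∈ Ico 0 x, η * d < u s}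

noncomputable def energy (p : ℝ) (f u : ℝ → ℝ) (x : ℝ) : ℝ :=
  |deriv u x| ^ p / (p / (p - 1)) + Fhat f (u x)

def NonConstOn (R1 R2 : ℝ) (u : ℝ → ℝ) : Prop :=
  ∃ x ∈ Icc R1 R2, ∃ x' ∈ Icc R1 R2, u x ≠ u x'

def DistinctOn (R1 R2 : ℝ) (u v : ℝ → ℝ) : Prop :=
  ∃ x ∈ Icc R1 R2, u x ≠ v x

noncomputable def nOverPstar (p : ℝ) (N : ℕ) : ℝ :=
  if p < (N:ℝ) then ((N:ℝ) - p) / p else 0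

open scoped NNReal

/-!
A solution near the constant `e` is a solution of the planar system `y' = ψ (v / w)`,
`v' = -w h(y)` with `y = u - e`, `v = w φ_p(y')`, `w = r ^ (N - 1)`, and it satisfies the Neumann
condition at `R2` as soon as `v` vanishes there. The law `ψ s = |s| ^ (1 / (p - 1) - 1) s` fails to
be Lipschitz at `0` and `v / w` is singular at `R1 = 0`; both are regularised, so that the solution
started at `(d, 0)` depends continuously on the datum `d`, with bounds uniform in the
regularisation. The Prüfer angle swept by `(y, v)` is bounded for fixed `d ≠ 0`. Since `p > 2`, the
graph of `ψ` is steeper at `0` than any line, so this angle exceeds any given bound once `d` is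
small. By the intermediate value theorem some datum between the two makes the angle a multiple of
`π`, so that `v` vanishes at `R2`, and compactness removes the regularisation. Hence there are
non-constant solutions with `u R1` arbitrarily close to `e`, on either side of it.
-/

section Potential

/-- The potential `∫₀ˣ f` of a force law `f`, used both for the kinetic and for the elastic part of
the energy. -/
noncomputable def potential (f : ℝ → ℝ) (x : ℝ) : ℝ := ∫ t in (0 : ℝ)..x, f t

variable {f g : ℝ → ℝ} {c x : ℝ}

theorem potential_zero (f : ℝ → ℝ) : potential f 0 = 0 := intervalIntegral.integral_same

theorem hasDerivAt_potential (hf : Continuous f) (x : ℝ) : HasDerivAt (potential f) (f x) x :=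
  (hf.integral_hasStrictDerivAt 0 x).hasDerivAt

theorem potential_le_potential (hf : Continuous f) (hg : Continuous g)
    (h : ∀ t, |t| ≤ |x| → t * f t ≤ t * g t) : potential f x ≤ potential g x := by
  rcases le_total 0 x with hx | hx
  · refine intervalIntegral.integral_mono_on_of_le_Ioo hx (hf.intervalIntegrable _ _)
      (hg.intervalIntegrable _ _) fun t ht => ?_
    exact le_of_mul_le_mul_left (h t (abs_le_abs_of_nonneg ht.1.le ht.2.le)) ht.1
  · rw [potential, potential, intervalIntegral.integral_symm, intervalIntegral.integral_symm x,
      neg_le_neg_iff]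
    refine intervalIntegral.integral_mono_on_of_le_Ioo hx (hg.intervalIntegrable _ _)
      (hf.intervalIntegrable _ _) fun t ht => ?_
    exact (mul_le_mul_left_of_neg ht.2).1 (h t (abs_le_abs_of_nonpos ht.2.le ht.1.le))

theorem potential_linear (c x : ℝ) : potential (fun t => c * t) x = c * x ^ 2 / 2 := by
  rw [potential, intervalIntegral.integral_const_mul, integral_id]
  ring

theorem mul_sq_div_two_le_potential (hf : Continuous f)
    (h : ∀ t, |t| ≤ |x| → c * t ^ 2 ≤ t * f t) : c * x ^ 2 / 2 ≤ potential f x := by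
  rw [← potential_linear]
  exact potential_le_potential (continuous_const_mul c) hf fun t ht =>
    (by ring : t * (c * t) = c * t ^ 2).trans_le (h t ht)

theorem potential_le_mul_sq_div_two (hf : Continuous f)
    (h : ∀ t, |t| ≤ |x| → t * f t ≤ c * t ^ 2) : potential f x ≤ c * x ^ 2 / 2 := by
  rw [← potential_linear]
  exact potential_le_potential hf (continuous_const_mul c) fun t ht =>
    (h t ht).trans_eq (by ring)

theorem potential_nonneg (hf : Continuous f) (h : ∀ t, 0 ≤ t * f t) (x : ℝ) :
    0 ≤ potential f x := by
  simpa using mul_sq_div_two_le_potential (c := 0) (x := x) hf fun t _ => by simpa using h t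

theorem abs_potential_le {k : ℝ} (h : ∀ t, |t| ≤ |x| → |f t| ≤ k) : |potential f x| ≤ k * |x| := by
  have hle : ∀ t ∈ uIoc 0 x, ‖f t‖ ≤ k := fun t ht =>
    h t (by simpa using abs_sub_left_of_mem_uIcc (uIoc_subset_uIcc ht))
  simpa [potential] using intervalIntegral.norm_integral_le_of_norm_le_const hle

end Potential

section RegPow

/-- A regularisation of the inverse `s ↦ |s|^(α-1) s` of `phip p`, where `α = 1 / (p - 1)`: it is
smooth for `ε ≠ 0` and equal to that inverse for `ε = 0`. -/
noncomputable def regPow (α ε s : ℝ) : ℝ := s * (s ^ 2 + ε ^ 2) ^ ((α - 1) / 2)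

variable {α ε s : ℝ}

theorem regPow_neg (α ε s : ℝ) : regPow α ε (-s) = -regPow α ε s := by
  simp only [regPow, neg_sq, neg_mul]

theorem mul_regPow_nonneg (α ε s : ℝ) : 0 ≤ s * regPow α ε s := by
  rw [regPow, ← mul_assoc]
  exact mul_nonneg (mul_self_nonneg s) (by positivity)

theorem regPow_eps_zero (α s : ℝ) : regPow α 0 s = s * |s| ^ (α - 1) := by
  rw [regPow, zero_pow two_ne_zero, add_zero, ← sq_abs, ← Real.rpow_natCast,
    ← Real.rpow_mul (abs_nonneg s)]
  congr 2
  push_cast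
  ring

theorem abs_regPow_eps_zero (hα : α ≠ 0) (s : ℝ) : |regPow α 0 s| = |s| ^ α := by
  rcases eq_or_ne s 0 with rfl | hs
  · simp [regPow, Real.zero_rpow hα]
  rw [regPow_eps_zero, abs_mul, abs_of_nonneg (a := (_ : ℝ) ^ _) (by positivity), mul_comm,
    ← Real.rpow_add_one (abs_ne_zero.2 hs), sub_add_cancel]

theorem rpow_mul_sq_le_mul_regPow (hα : α ≤ 1) (hs : 0 < s ^ 2 + ε ^ 2) {Q : ℝ}
    (hQ : s ^ 2 + ε ^ 2 ≤ Q) : Q ^ ((α - 1) / 2) * s ^ 2 ≤ s * regPow α ε s := by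
  have h : Q ^ ((α - 1) / 2) ≤ (s ^ 2 + ε ^ 2) ^ ((α - 1) / 2) :=
    Real.rpow_le_rpow_of_nonpos hs hQ (by linarith)
  calc Q ^ ((α - 1) / 2) * s ^ 2 ≤ (s ^ 2 + ε ^ 2) ^ ((α - 1) / 2) * s ^ 2 := by gcongr
    _ = s * regPow α ε s := by rw [regPow]; ring

theorem abs_regPow_le (hα : α ≤ 1) (hα0 : α ≠ 0) (ε s : ℝ) : |regPow α ε s| ≤ |s| ^ α := by
  rcases eq_or_ne s 0 with rfl | hs
  · simp [regPow, Real.zero_rpow hα0]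
  have hle : (s ^ 2 + ε ^ 2) ^ ((α - 1) / 2) ≤ (s ^ 2 + 0 ^ 2) ^ ((α - 1) / 2) :=
    Real.rpow_le_rpow_of_nonpos (by positivity) (by nlinarith [sq_nonneg ε]) (by linarith)
  rw [← abs_regPow_eps_zero hα0, regPow, regPow, abs_mul, abs_mul]
  gcongr

theorem abs_regPow_le_one_add (hα : 0 < α) (hα1 : α ≤ 1) (ε s : ℝ) :
    |regPow α ε s| ≤ 1 + |s| := by
  refine (abs_regPow_le hα1 hα.ne' ε s).trans ?_
  rcases le_total |s| 1 with h | h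
  · linarith [Real.rpow_le_one (abs_nonneg s) h hα.le, abs_nonneg s]
  · linarith [Real.rpow_le_self_of_one_le h hα1]

theorem contDiff_regPow (α : ℝ) (hε : ε ≠ 0) : ContDiff ℝ 1 (regPow α ε) :=
  contDiff_id.mul (ContDiff.rpow_const_of_ne (by fun_prop) fun s => by positivity)

theorem continuous_regPow_uncurry (hα : 0 < α) (hα1 : α ≤ 1) :
    Continuous fun z : ℝ × ℝ => regPow α z.1 z.2 := by
  refine continuous_iff_continuousAt.2 fun ⟨ε, s⟩ => ?_
  rcases eq_or_ne s 0 with rfl | hs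
  · have h0 : regPow α ε 0 = 0 := by simp [regPow]
    have hbound : Tendsto (fun z : ℝ × ℝ => |z.2| ^ α) (𝓝 (ε, 0)) (𝓝 0) := by
      have : ContinuousAt (fun z : ℝ × ℝ => |z.2| ^ α) (ε, 0) :=
        (continuous_snd.abs.continuousAt).rpow_const (Or.inr hα.le)
      simpa [ContinuousAt, Real.zero_rpow hα.ne'] using this
    rw [ContinuousAt, h0]
    exact squeeze_zero_norm (fun z => abs_regPow_le hα1 hα.ne' z.1 z.2) hbound
  · exact continuousAt_snd.mul (ContinuousAt.rpow_const (by fun_prop) (Or.inl (by positivity)))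

theorem continuous_regPow (hα : 0 < α) (hα1 : α ≤ 1) (ε : ℝ) : Continuous (regPow α ε) :=
  (continuous_regPow_uncurry hα hα1).comp (Continuous.prodMk_right ε)

theorem mul_regPow_le_two_mul_potential (hα : 0 < α) (hα1 : α ≤ 1) (hε : ε ≠ 0) (s : ℝ) :
    s * regPow α ε s ≤ 2 * potential (regPow α ε) s := by
  have h := mul_sq_div_two_le_potential (x := s) (c := (s ^ 2 + ε ^ 2) ^ ((α - 1) / 2))
    (continuous_regPow hα hα1 ε) fun t ht => rpow_mul_sq_le_mul_regPow hα1 (by positivity)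
      (add_le_add_left (sq_le_sq.2 ht) _)
  calc s * regPow α ε s = 2 * ((s ^ 2 + ε ^ 2) ^ ((α - 1) / 2) * s ^ 2 / 2) := by
        rw [regPow]; ring
    _ ≤ _ := by gcongr

theorem exists_mul_sq_le_mul_regPow (hα : α < 1) (X : ℝ) :
    ∃ κ > 0, ∀ ε ∈ Ioc 0 κ, ∀ s, |s| ≤ κ → X * s ^ 2 ≤ s * regPow α ε s := by
  have hlim : Tendsto (fun Q : ℝ => Q ^ ((α - 1) / 2)) (𝓝[>] 0) atTop :=
    tendsto_rpow_neg_nhdsGT_zero (by linarith)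
  obtain ⟨Q, hX, hQ⟩ := ((hlim.eventually_ge_atTop X).and self_mem_nhdsWithin).exists
  refine ⟨√(Q / 2), by positivity, fun ε hε s hs => ?_⟩
  have hsq : √(Q / 2) ^ 2 = Q / 2 := Real.sq_sqrt (by positivity)
  have hε0 := hε.1
  have hle : s ^ 2 + ε ^ 2 ≤ Q := by
    have h₁ : |s| ^ 2 ≤ √(Q / 2) ^ 2 := by gcongr
    have h₂ : ε ^ 2 ≤ √(Q / 2) ^ 2 := pow_le_pow_left₀ hε0.le hε.2 2
    rw [sq_abs] at h₁
    linarith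
  exact (mul_le_mul_of_nonneg_right hX (sq_nonneg s)).trans
    (rpow_mul_sq_le_mul_regPow hα.le (by positivity) hle)

theorem phip_regPow {p : ℝ} (hp : 1 < p) (s : ℝ) : phip p (regPow (1 / (p - 1)) 0 s) = s := by
  rcases eq_or_ne s 0 with rfl | hs
  · simp [phip, regPow]
  have hs' : 0 < |s| := abs_pos.2 hs
  have hp' : p - 1 ≠ 0 := by linarith
  set α := 1 / (p - 1) with hα
  have hexp : α * (p - 2) + (α - 1) = 0 := by rw [hα]; field_simp; ring
  calc phip p (regPow α 0 s) = (|s| ^ α) ^ (p - 2) * (s * |s| ^ (α - 1)) := by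
        rw [phip, abs_regPow_eps_zero (one_div_ne_zero hp'), regPow_eps_zero]
    _ = |s| ^ (α * (p - 2) + (α - 1)) * s := by
        rw [← Real.rpow_mul hs'.le, Real.rpow_add hs']; ring
    _ = s := by rw [hexp, Real.rpow_zero, one_mul]

end RegPow

/-- A flux law `ψ`, which expresses `y'` through the slope `v / w`. The bound by twice the potential
says that `ψ` is sublinear in the averaged sense needed to control the energy from below. -/
structure IsFluxLaw (ψ : ℝ → ℝ) : Prop where
  continuous : Continuous ψ
  mul_nonneg : ∀ s, 0 ≤ s * ψ s
  mul_le_two_mul_potential : ∀ s, s * ψ s ≤ 2 * potential ψ s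
  abs_le : ∀ s, |ψ s| ≤ 1 + |s|

namespace IsFluxLaw

variable {ψ : ℝ → ℝ}

theorem potential_nonneg (hψ : IsFluxLaw ψ) (s : ℝ) : 0 ≤ potential ψ s :=
  _root_.potential_nonneg hψ.continuous hψ.mul_nonneg s

theorem potential_le (hψ : IsFluxLaw ψ) (s : ℝ) : potential ψ s ≤ (1 + |s|) * |s| :=
  (le_abs_self _).trans (abs_potential_le fun t ht => (hψ.abs_le t).trans (by gcongr))

end IsFluxLaw

theorem isFluxLaw_regPow {α ε : ℝ} (hα : 0 < α) (hα1 : α ≤ 1) (hε : ε ≠ 0) :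
    IsFluxLaw (regPow α ε) where
  continuous := continuous_regPow hα hα1 ε
  mul_nonneg := mul_regPow_nonneg α ε
  mul_le_two_mul_potential := mul_regPow_le_two_mul_potential hα hα1 hε
  abs_le := abs_regPow_le_one_add hα hα1 ε

/-- A bounded Lipschitz force `h` pointing towards `0` which is comparable to a linear one on
`[-η, η]` and to a constant outside. -/
structure IsRestoring (h : ℝ → ℝ) (C : ℝ≥0) (c η : ℝ) : Prop where
  c_pos : 0 < c
  η_pos : 0 < η
  lipschitz : LipschitzWith C h
  abs_le : ∀ x, |h x| ≤ C * min |x| η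
  le_mul_self : ∀ x, c * (min |x| η * |x|) ≤ x * h x

namespace IsRestoring

variable {h : ℝ → ℝ} {C : ℝ≥0} {c η : ℝ}

theorem abs_le_linear (hh : IsRestoring h C c η) (x : ℝ) : |h x| ≤ C * |x| :=
  (hh.abs_le x).trans (by gcongr; exact min_le_left _ _)

theorem abs_le_const (hh : IsRestoring h C c η) (x : ℝ) : |h x| ≤ C * η :=
  (hh.abs_le x).trans (by gcongr; exact min_le_right _ _)

theorem mul_self_le (hh : IsRestoring h C c η) (x : ℝ) : x * h x ≤ C * x ^ 2 := by
  calc x * h x ≤ |x| * |h x| := (le_abs_self _).trans_eq (abs_mul _ _)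
    _ ≤ |x| * (C * |x|) := by gcongr; exact hh.abs_le_linear x
    _ = C * x ^ 2 := by rw [← sq_abs]; ring

theorem mul_nonneg (hh : IsRestoring h C c η) (x : ℝ) : 0 ≤ x * h x := by
  have := hh.c_pos
  have := hh.η_pos
  exact le_trans (by positivity) (hh.le_mul_self x)

theorem mul_sq_le (hh : IsRestoring h C c η) {x : ℝ} (hx : |x| ≤ η) : c * x ^ 2 ≤ x * h x := by
  simpa only [min_eq_left hx, ← sq, sq_abs] using hh.le_mul_self x

theorem C_pos (hh : IsRestoring h C c η) : (0 : ℝ) < C := by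
  have hη := hh.η_pos
  have hle := (hh.mul_sq_le (abs_of_pos hη).le).trans (hh.mul_self_le η)
  exact hh.c_pos.trans_le (le_of_mul_le_mul_right hle (by positivity))

theorem potential_le (hh : IsRestoring h C c η) (x : ℝ) : potential h x ≤ C * x ^ 2 / 2 :=
  potential_le_mul_sq_div_two hh.lipschitz.continuous fun t _ => hh.mul_self_le t

theorem le_potential (hh : IsRestoring h C c η) (x : ℝ) :
    c * (min |x| η * |x|) / 2 ≤ potential h x := by
  have hc := hh.c_pos
  have hη := hh.η_pos
  rcases eq_or_ne x 0 with rfl | hx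
  · simp [potential_zero]
  have hx' : 0 < |x| := abs_pos.2 hx
  have hslope : c * (min |x| η * |x|) / 2 = c * (min |x| η / |x|) * x ^ 2 / 2 := by
    rw [← sq_abs x]; field_simp
  rw [hslope]
  refine mul_sq_div_two_le_potential hh.lipschitz.continuous fun t ht => ?_
  have hmin : min |x| η * |t| ≤ min |t| η * |x| := by
    rcases le_total |t| η with h | h
    · rw [min_eq_left h, mul_comm |t|]
      gcongr ?_ * _
      exact min_le_left _ _
    · rw [min_eq_right h]
      exact mul_le_mul (min_le_right _ _) ht (abs_nonneg t) hη.le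
  calc c * (min |x| η / |x|) * t ^ 2 = c * (min |x| η * |t| / |x| * |t|) := by
        rw [← sq_abs t]; ring
    _ ≤ c * (min |t| η * |t|) := by gcongr; exact (div_le_iff₀ hx').2 hmin
    _ ≤ t * h t := hh.le_mul_self t

theorem potential_nonneg (hh : IsRestoring h C c η) (x : ℝ) : 0 ≤ potential h x :=
  _root_.potential_nonneg hh.lipschitz.continuous hh.mul_nonneg x

theorem neg (hh : IsRestoring h C c η) : IsRestoring (fun x => -h (-x)) C c η where
  c_pos := hh.c_pos
  η_pos := hh.η_pos
  lipschitz := LipschitzWith.of_dist_le_mul fun x y => by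
    simpa only [dist_neg_neg] using hh.lipschitz.dist_le_mul (-x) (-y)
  abs_le x := by simpa only [abs_neg] using hh.abs_le (-x)
  le_mul_self x := by
    simpa only [abs_neg, neg_mul, mul_neg] using hh.le_mul_self (-x)

end IsRestoring

/-- A weight `w` on `[A, B]`, such as the radial weight `(x + ε) ^ (N - 1)`. -/
structure IsWeight (w : ℝ → ℝ) (A B : ℝ) : Prop where
  differentiableOn : DifferentiableOn ℝ w (Icc A B)
  monotoneOn : MonotoneOn w (Icc A B)
  left_pos : 0 < w A

theorem IsWeight.pos {w : ℝ → ℝ} {A B x : ℝ} (hw : IsWeight w A B) (hx : x ∈ Icc A B) :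
    0 < w x :=
  hw.left_pos.trans_le (hw.monotoneOn (left_mem_Icc.2 (hx.1.trans hx.2)) hx hx.1)

/-- A weight with a lower bound that may vanish at the left endpoint and a constant upper bound.
Estimates that depend on `w` only through `w₀` and `M` are uniform in the regularisation. -/
structure IsWeightBetween (w₀ : ℝ → ℝ) (M : ℝ) (w : ℝ → ℝ) (A B : ℝ) : Prop
    extends IsWeight w A B where
  lower : ∀ x ∈ Ioc A B, w₀ x ≤ w x
  upper : ∀ x ∈ Icc A B, w x ≤ M

theorem isWeightBetween_add_pow {A B ε : ℝ} (hA : 0 ≤ A) (hε : ε ∈ Ioc 0 1) (n : ℕ) :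
    IsWeightBetween (fun x => x ^ n) ((B + 1) ^ n) (fun x => (x + ε) ^ n) A B where
  differentiableOn := by fun_prop
  monotoneOn x hx x' _ hxx' := by
    have : 0 ≤ x + ε := by linarith [hx.1, hε.1]
    dsimp only
    gcongr
  left_pos := pow_pos (by linarith [hε.1]) n
  lower x hx := by
    have : 0 ≤ x := hA.trans hx.1.le
    gcongr
    linarith [hε.1]
  upper x hx := by
    have : 0 ≤ x + ε := by linarith [hx.1, hε.1]
    gcongr
    exacts [hx.2, hε.2]

/-- Solutions of the first order system `y' = ψ (v / w)`, `v' = -w h(y)` on `[A, B]` whose flux `v`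
vanishes at `A`. -/
structure IsSol (ψ h w : ℝ → ℝ) (A B : ℝ) (y v : ℝ → ℝ) : Prop where
  profile : ∀ x ∈ Icc A B, HasDerivWithinAt y (ψ (v x / w x)) (Icc A B) x
  flux : ∀ x ∈ Icc A B, HasDerivWithinAt v (-(w x * h (y x))) (Icc A B) x
  flux_left : v A = 0

/-- The energy of `(y, v)`, the sum of the kinetic and the elastic part. -/
noncomputable def hamiltonian (ψ h w y v : ℝ → ℝ) (x : ℝ) : ℝ :=
  potential ψ (v x / w x) + potential h (y x)

namespace IsSol

variable {ψ h w : ℝ → ℝ} {A B c η : ℝ} {C : ℝ≥0} {y v : ℝ → ℝ} {x : ℝ}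

theorem continuousOn_profile (hs : IsSol ψ h w A B y v) : ContinuousOn y (Icc A B) :=
  fun x hx => (hs.profile x hx).continuousWithinAt

theorem continuousOn_flux (hs : IsSol ψ h w A B y v) : ContinuousOn v (Icc A B) :=
  fun x hx => (hs.flux x hx).continuousWithinAt

theorem neg (hs : IsSol ψ (fun t => -h (-t)) w A B y v) (hψ : ∀ s, ψ (-s) = -ψ s) :
    IsSol ψ h w A B (fun x => -y x) (fun x => -v x) where
  profile x hx := by simpa only [neg_div, hψ] using (hs.profile x hx).fun_neg
  flux x hx := by simpa only [mul_neg, neg_neg] using (hs.flux x hx).fun_neg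
  flux_left := by simp only [hs.flux_left, neg_zero]

theorem abs_flux_le (hs : IsSol ψ h w A B y v) (hw : MonotoneOn w (Icc A B)) (hwA : 0 ≤ w A)
    {k : ℝ} (hk : ∀ t ∈ Icc A B, |h (y t)| ≤ k) (hx : x ∈ Icc A B) :
    |v x| ≤ w x * (k * (x - A)) := by
  have hA : A ∈ Icc A B := left_mem_Icc.2 (hx.1.trans hx.2)
  have hsub : Icc A x ⊆ Icc A B := Icc_subset_Icc le_rfl hx.2
  have hbound : ∀ t ∈ Ico A x, ‖-(w t * h (y t))‖ ≤ w x * k := fun t ht => by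
    have ht' : t ∈ Icc A B := hsub (Ico_subset_Icc_self ht)
    have hwt : 0 ≤ w t := hwA.trans (hw hA ht' ht.1)
    rw [norm_neg, norm_mul, Real.norm_of_nonneg hwt]
    exact mul_le_mul (hw ht' hx ht.2.le) (hk t ht') (norm_nonneg _) (hwA.trans (hw hA hx hx.1))
  have := norm_image_sub_le_of_norm_deriv_le_segment'
    (fun t ht => (hs.flux t (hsub ht)).mono hsub) hbound x (right_mem_Icc.2 hx.1)
  rwa [hs.flux_left, sub_zero, Real.norm_eq_abs, mul_assoc] at this

theorem abs_slope_le (hs : IsSol ψ h w A B y v) (hw : MonotoneOn w (Icc A B)) (hwA : 0 ≤ w A)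
    {k : ℝ} (hk : ∀ t ∈ Icc A B, |h (y t)| ≤ k) (hx : x ∈ Icc A B) :
    |v x / w x| ≤ k * (x - A) := by
  have hA : A ∈ Icc A B := left_mem_Icc.2 (hx.1.trans hx.2)
  have hk0 : 0 ≤ k := (abs_nonneg _).trans (hk x hx)
  have hwx : 0 ≤ w x := hwA.trans (hw hA hx hx.1)
  rw [abs_div, abs_of_nonneg hwx]
  exact div_le_of_le_mul₀ hwx (mul_nonneg hk0 (sub_nonneg.2 hx.1))
    ((hs.abs_flux_le hw hwA hk hx).trans_eq (mul_comm _ _))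

theorem hasDerivWithinAt_hamiltonian (hs : IsSol ψ h w A B y v) (hψ : Continuous ψ)
    (hh : Continuous h) (hw : IsWeight w A B) (hx : x ∈ Icc A B) :
    HasDerivWithinAt (hamiltonian ψ h w y v)
      (-(v x / w x * ψ (v x / w x) * (derivWithin w (Icc A B) x / w x))) (Icc A B) x := by
  have hwx := (hw.pos hx).ne'
  have hslope := (hs.flux x hx).div (hw.differentiableOn x hx).hasDerivWithinAt hwx
  have hkin := (hasDerivAt_potential hψ (v x / w x)).comp_hasDerivWithinAt x hslope
  have hel := (hasDerivAt_potential hh (y x)).comp_hasDerivWithinAt x (hs.profile x hx)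
  refine (hkin.add hel).congr_deriv ?_
  field_simp
  ring

theorem continuousOn_hamiltonian (hs : IsSol ψ h w A B y v) (hψ : Continuous ψ)
    (hh : Continuous h) (hw : IsWeight w A B) :
    ContinuousOn (hamiltonian ψ h w y v) (Icc A B) :=
  fun _ hx => (hs.hasDerivWithinAt_hamiltonian hψ hh hw hx).continuousWithinAt

theorem antitoneOn_hamiltonian (hs : IsSol ψ h w A B y v) (hψ : IsFluxLaw ψ)
    (hh : Continuous h) (hw : IsWeight w A B) :
    AntitoneOn (hamiltonian ψ h w y v) (Icc A B) := by
  refine antitoneOn_of_hasDerivWithinAt_nonpos (convex_Icc A B)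
    (hs.continuousOn_hamiltonian hψ.continuous hh hw)
    (fun x hx => (hs.hasDerivWithinAt_hamiltonian hψ.continuous hh hw
      (interior_subset hx)).mono interior_subset) fun x hx => neg_nonpos.2 ?_
  exact mul_nonneg (hψ.mul_nonneg _) (div_nonneg hw.monotoneOn.derivWithin_nonneg
    (hw.pos (interior_subset hx)).le)

theorem monotoneOn_hamiltonian_mul_sq (hs : IsSol ψ h w A B y v) (hψ : IsFluxLaw ψ)
    (hh : IsRestoring h C c η) (hw : IsWeight w A B) :
    MonotoneOn (fun x => hamiltonian ψ h w y v x * w x ^ 2) (Icc A B) := by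
  have hcont := hh.lipschitz.continuous
  refine monotoneOn_of_hasDerivWithinAt_nonneg (f' := fun x => w x * derivWithin w (Icc A B) x *
      (2 * hamiltonian ψ h w y v x - v x / w x * ψ (v x / w x))) (convex_Icc A B)
    ((hs.continuousOn_hamiltonian hψ.continuous hcont hw).mul
      (hw.differentiableOn.continuousOn.pow 2)) (fun x hx => ?_) fun x hx => ?_
  all_goals replace hx := interior_subset hx
  · have hE := hs.hasDerivWithinAt_hamiltonian hψ.continuous hcont hw hx
    have hw2 := (hw.differentiableOn x hx).hasDerivWithinAt.fun_pow 2
    refine ((hE.fun_mul hw2).mono interior_subset).congr_deriv ?_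
    have := (hw.pos hx).ne'
    field_simp
    ring
  · refine mul_nonneg (mul_nonneg (hw.pos hx).le hw.monotoneOn.derivWithin_nonneg) ?_
    have := hψ.mul_le_two_mul_potential (v x / w x)
    have := hh.potential_nonneg (y x)
    rw [hamiltonian]
    linarith

end IsSol

namespace IsSol

variable {ψ h w : ℝ → ℝ} {A B c η : ℝ} {C : ℝ≥0} {y v : ℝ → ℝ} {x : ℝ}

theorem abs_deriv_profile_le (hs : IsSol ψ h w A B y v) (hψ : ∀ s, |ψ s| ≤ 1 + |s|)
    (hh : IsRestoring h C c η) (hw : MonotoneOn w (Icc A B)) (hwA : 0 ≤ w A)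
    (hx : x ∈ Icc A B) : |ψ (v x / w x)| ≤ 1 + C * η * (B - A) := by
  have hη := hh.η_pos
  refine (hψ _).trans (add_le_add_right ?_ 1)
  refine (hs.abs_slope_le hw hwA (fun t _ => hh.abs_le_const (y t)) hx).trans ?_
  gcongr
  exact hx.2

theorem abs_profile_sub_le (hs : IsSol ψ h w A B y v) (hψ : ∀ s, |ψ s| ≤ 1 + |s|)
    (hh : IsRestoring h C c η) (hw : MonotoneOn w (Icc A B)) (hwA : 0 ≤ w A) {x' : ℝ}
    (hx : x ∈ Icc A B) (hx' : x' ∈ Icc A B) :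
    |y x' - y x| ≤ (1 + C * η * (B - A)) * |x' - x| :=
  (convex_Icc A B).norm_image_sub_le_of_norm_hasDerivWithin_le hs.profile
    (fun _ ht => hs.abs_deriv_profile_le hψ hh hw hwA ht) hx hx'

theorem abs_flux_sub_le (hs : IsSol ψ h w A B y v) (hh : IsRestoring h C c η)
    (hw : MonotoneOn w (Icc A B)) (hwA : 0 ≤ w A) {x' : ℝ} (hx : x ∈ Icc A B)
    (hx' : x' ∈ Icc A B) : |v x' - v x| ≤ w B * (C * η) * |x' - x| := by
  have hA : A ∈ Icc A B := left_mem_Icc.2 (hx.1.trans hx.2)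
  have hB : B ∈ Icc A B := right_mem_Icc.2 (hx.1.trans hx.2)
  refine (convex_Icc A B).norm_image_sub_le_of_norm_hasDerivWithin_le hs.flux
    (fun t ht => ?_) hx hx'
  have hwt : 0 ≤ w t := hwA.trans (hw hA ht ht.1)
  rw [norm_neg, norm_mul, Real.norm_of_nonneg hwt]
  exact mul_le_mul (hw ht hB ht.2) (hh.abs_le_const _) (norm_nonneg _) (hwA.trans (hw hA hB hB.1))

theorem hamiltonian_left (hs : IsSol ψ h w A B y v) :
    hamiltonian ψ h w y v A = potential h (y A) := by
  rw [hamiltonian, hs.flux_left, zero_div, potential_zero, zero_add]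

theorem min_mul_abs_profile_le (hs : IsSol ψ h w A B y v) (hψ : IsFluxLaw ψ)
    (hh : IsRestoring h C c η) (hw : IsWeight w A B) (hx : x ∈ Icc A B) :
    c * (min |y x| η * |y x|) ≤ C * y A ^ 2 := by
  have hE := hs.antitoneOn_hamiltonian hψ hh.lipschitz.continuous hw
    (left_mem_Icc.2 (hx.1.trans hx.2)) hx hx.1
  rw [hs.hamiltonian_left, hamiltonian] at hE
  linarith [hh.potential_le (y A), hh.le_potential (y x), hψ.potential_nonneg (v x / w x)]

theorem abs_profile_le (hs : IsSol ψ h w A B y v) (hψ : IsFluxLaw ψ)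
    (hh : IsRestoring h C c η) (hw : IsWeight w A B) (hyA : C * y A ^ 2 ≤ c * η ^ 2)
    (hx : x ∈ Icc A B) : |y x| ≤ η := by
  by_contra! hlt
  have hη := hh.η_pos
  have hE := hs.min_mul_abs_profile_le hψ hh hw hx
  rw [min_eq_right hlt.le] at hE
  have hstrict : c * (η * η) < c * (η * |y x|) :=
    mul_lt_mul_of_pos_left (mul_lt_mul_of_pos_left hlt hη) hh.c_pos
  linarith

theorem mul_sq_profile_le (hs : IsSol ψ h w A B y v) (hψ : IsFluxLaw ψ)
    (hh : IsRestoring h C c η) (hw : IsWeight w A B) (hyA : C * y A ^ 2 ≤ c * η ^ 2)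
    (hx : x ∈ Icc A B) : c * y x ^ 2 ≤ C * y A ^ 2 := by
  simpa only [min_eq_left (hs.abs_profile_le hψ hh hw hyA hx), ← sq, sq_abs] using
    hs.min_mul_abs_profile_le hψ hh hw hx

theorem abs_force_le (hs : IsSol ψ h w A B y v) (hψ : IsFluxLaw ψ)
    (hh : IsRestoring h C c η) (hw : IsWeight w A B) (hyA : C * y A ^ 2 ≤ c * η ^ 2)
    (hx : x ∈ Icc A B) : |h (y x)| ≤ C * √(C / c) * |y A| := by
  have hc := hh.c_pos
  have hsq : |y x| ≤ √(C / c) * |y A| := by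
    refine abs_le_of_sq_le_sq ?_ (by positivity)
    rw [mul_pow, Real.sq_sqrt (by positivity), sq_abs, div_mul_eq_mul_div, le_div_iff₀ hc,
      mul_comm]
    exact hs.mul_sq_profile_le hψ hh hw hyA hx
  rw [mul_assoc]
  exact (hh.abs_le_linear _).trans (by gcongr)

theorem min_le_sq_add_sq (hψ : IsFluxLaw ψ) (hh : IsRestoring h C c η) {e l : ℝ}
    (he : e ≤ hamiltonian ψ h w y v x) (he0 : 0 < e) (hl : 0 < l) (hlw : l ≤ w x) :
    min (e / C) ((l * min 1 (e / 4)) ^ 2) ≤ y x ^ 2 + v x ^ 2 := by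
  rw [hamiltonian] at he
  rcases le_total (e / 2) (potential h (y x)) with hel | hel
  · have : e / C ≤ y x ^ 2 := by
      rw [div_le_iff₀' hh.C_pos]
      linarith [hh.potential_le (y x)]
    exact (min_le_left _ _).trans (this.trans (le_add_of_nonneg_right (sq_nonneg _)))
  · have hkin : e / 2 ≤ (1 + |v x / w x|) * |v x / w x| := by
      linarith [hψ.potential_le (v x / w x)]
    have hslope : min 1 (e / 4) ≤ |v x / w x| := by
      rcases le_total 1 |v x / w x| with h1 | h1
      · exact (min_le_left _ _).trans h1
      · refine (min_le_right _ _).trans ?_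
        nlinarith [abs_nonneg (v x / w x)]
    have hflux : l * min 1 (e / 4) ≤ |v x| := by
      have hwx : 0 < w x := hl.trans_le hlw
      rw [abs_div, abs_of_pos hwx, le_div_iff₀' hwx] at hslope
      exact (mul_le_mul_of_nonneg_right hlw (by positivity)).trans hslope
    have hsq : (l * min 1 (e / 4)) ^ 2 ≤ v x ^ 2 := by
      rw [← sq_abs (v x)]
      gcongr
    exact (min_le_right _ _).trans (hsq.trans (le_add_of_nonneg_left (sq_nonneg _)))

theorem le_hamiltonian (hs : IsSol ψ h w A B y v) (hψ : IsFluxLaw ψ) (hh : IsRestoring h C c η)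
    (hw : IsWeight w A B) {d l M T : ℝ} (hd : 0 ≤ d) (hdT : d ≤ |y T|) (hT : T ∈ Icc A B)
    (hl : 0 ≤ l) (hlT : l ≤ w T) (hx : x ∈ Icc T B) (hM : w x ≤ M) :
    c * (min d η * d) / 2 * (l / M) ^ 2 ≤ hamiltonian ψ h w y v x := by
  have hc := hh.c_pos
  have hη := hh.η_pos
  have hx' : x ∈ Icc A B := ⟨hT.1.trans hx.1, hx.2⟩
  have hwx : 0 < w x := hw.pos hx'
  have hET : c * (min d η * d) / 2 ≤ hamiltonian ψ h w y v T := by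
    calc c * (min d η * d) / 2 ≤ c * (min |y T| η * |y T|) / 2 := by gcongr
      _ ≤ potential h (y T) := hh.le_potential _
      _ ≤ hamiltonian ψ h w y v T := le_add_of_nonneg_left (hψ.potential_nonneg _)
  have hE0 : 0 ≤ hamiltonian ψ h w y v x :=
    add_nonneg (hψ.potential_nonneg _) (hh.potential_nonneg _)
  rw [div_pow, ← mul_div_assoc, div_le_iff₀ (by have := hwx.trans_le hM; positivity)]
  calc c * (min d η * d) / 2 * l ^ 2 ≤ hamiltonian ψ h w y v T * w T ^ 2 := by
        have := le_trans (by positivity) hET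
        gcongr
    _ ≤ hamiltonian ψ h w y v x * w x ^ 2 :=
        hs.monotoneOn_hamiltonian_mul_sq hψ hh hw hT hx' hx.1
    _ ≤ hamiltonian ψ h w y v x * M ^ 2 := by gcongr

theorem exists_le_sq_add_sq (hAB : A < B) (hh : IsRestoring h C c η) {w₀ : ℝ → ℝ} {M d : ℝ}
    (hw₀ : ∀ x ∈ Ioc A B, 0 < w₀ x) (hM : 0 < M) (hd : 0 < d) :
    ∃ m > 0, ∀ ψ w y v, IsFluxLaw ψ → IsWeightBetween w₀ M w A B → IsSol ψ h w A B y v →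
      y A = d → ∀ x ∈ Icc A B, m ≤ y x ^ 2 + v x ^ 2 := by
  have hc := hh.c_pos
  have hη := hh.η_pos
  have hC := hh.C_pos
  set D := 1 + C * η * (B - A)
  have hD0 : 0 < D := by positivity
  set τ := min (d / 2 / D) (B - A)
  have hτ0 : 0 < τ := by positivity
  have hτD : D * τ ≤ d / 2 := (le_div_iff₀' hD0).1 (min_le_left _ _)
  have hT : A + τ ∈ Ioc A B := ⟨by linarith, by linarith [min_le_right (d / 2 / D) (B - A)]⟩
  have hwT := hw₀ _ hT
  set e := c * (min (d / 2) η * (d / 2)) / 2 * (w₀ (A + τ) / M) ^ 2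
  refine ⟨min ((d / 2) ^ 2) (min (e / C) ((w₀ (A + τ) * min 1 (e / 4)) ^ 2)), by positivity, ?_⟩
  intro ψ w y v hψ hw hs hyA x hx
  have hA := left_mem_Icc.2 hAB.le
  have hnear : ∀ t ∈ Icc A (A + τ), d / 2 ≤ y t := fun t ht => by
    have hle := hs.abs_profile_sub_le hψ.abs_le hh hw.monotoneOn hw.left_pos.le hA
      ⟨ht.1, ht.2.trans hT.2⟩
    rw [hyA, abs_of_nonneg (sub_nonneg.2 ht.1)] at hle
    have : D * (t - A) ≤ D * τ := by gcongr; linarith [ht.2]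
    linarith [neg_abs_le (y t - d)]
  rcases le_total x (A + τ) with hxT | hxT
  · refine (min_le_left _ _).trans (le_add_of_le_of_nonneg ?_ (sq_nonneg _))
    have := hnear x ⟨hx.1, hxT⟩
    gcongr
  · refine (min_le_right _ _).trans (min_le_sq_add_sq hψ hh ?_ (by positivity) hwT
      ((hw.lower _ hT).trans (hw.monotoneOn (Ioc_subset_Icc_self hT) hx hxT)))
    exact hs.le_hamiltonian hψ hh hw.toIsWeight (by positivity)
      ((hnear _ ⟨hT.1.le, le_rfl⟩).trans (le_abs_self _)) (Ioc_subset_Icc_self hT) hwT.le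
      (hw.lower _ hT) ⟨hxT, hx.2⟩ (hw.upper _ hx)

end IsSol

section Pruefer

/-- Rotation rate of the point `(a y, v)` in the phase plane when `y' = P` and `v' = -Q`, i.e. the
derivative of its Prüfer angle. -/
noncomputable def rotRate (a y v P Q : ℝ) : ℝ := a * (v * P + y * Q) / ((a * y) ^ 2 + v ^ 2)

theorem le_rotRate {a y v P Q g : ℝ} (hpos : 0 < (a * y) ^ 2 + v ^ 2)
    (hy : g * (a * y) ^ 2 ≤ a * (y * Q)) (hv : g * v ^ 2 ≤ a * (v * P)) :
    g ≤ rotRate a y v P Q := by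
  rw [rotRate, le_div_iff₀ hpos]
  linarith

theorem mul_sq_add_sq_pos {a y v : ℝ} (ha : 0 < a) (h : 0 < y ^ 2 + v ^ 2) :
    0 < (a * y) ^ 2 + v ^ 2 := by
  rcases eq_or_ne v 0 with rfl | hv
  · have : y ≠ 0 := fun hy => by simp [hy] at h
    positivity
  · positivity

variable {A B : ℝ}

theorem mul_sin_add_mul_cos_eq_zero {a : ℝ} {y v P Q θ : ℝ → ℝ}
    (hy : ∀ x ∈ Icc A B, HasDerivWithinAt y (P x) (Icc A B) x)
    (hv : ∀ x ∈ Icc A B, HasDerivWithinAt v (-Q x) (Icc A B) x)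
    (hθ : ∀ x ∈ Icc A B,
      HasDerivWithinAt θ (rotRate a (y x) (v x) (P x) (Q x)) (Icc A B) x)
    (hpos : ∀ x ∈ Icc A B, 0 < (a * y x) ^ 2 + v x ^ 2) (hθA : θ A = 0) (hvA : v A = 0)
    {x : ℝ} (hx : x ∈ Icc A B) : a * y x * sin (θ x) + v x * cos (θ x) = 0 := by
  set q : ℝ → ℝ := fun x => a * y x * sin (θ x) + v x * cos (θ x) with hq
  set D : ℝ → ℝ := fun x => (a * y x) ^ 2 + v x ^ 2
  have hderiv : ∀ x ∈ Icc A B, HasDerivWithinAt (fun x => q x ^ 2 / D x) 0 (Icc A B) x := by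
    intro x hx
    have hay := (hy x hx).const_mul a
    have hq' := (hay.fun_mul (hθ x hx).sin).fun_add ((hv x hx).fun_mul (hθ x hx).cos)
    have hD' := (hay.fun_pow 2).fun_add ((hv x hx).fun_pow 2)
    have hne := (hpos x hx).ne'
    refine ((hq'.fun_pow 2).fun_div hD' hne).congr_deriv (div_eq_zero_iff.2 (Or.inl ?_))
    have hrot : rotRate a (y x) (v x) (P x) (Q x) * ((a * y x) ^ 2 + v x ^ 2) =
        a * (v x * P x + y x * Q x) := div_mul_cancel₀ _ hne
    push_cast
    linear_combination
      2 * q x * (a * y x * cos (θ x) - v x * sin (θ x)) * hrot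
  have hconst := constant_of_has_deriv_right_zero
    (fun x hx => (hderiv x hx).continuousWithinAt) (fun x hx =>
      (hderiv x (Ico_subset_Icc_self hx)).mono_of_mem_nhdsWithin (Icc_mem_nhdsGE_of_mem hx)) x hx
  have hqA : q A = 0 := by simp only [hq, hθA, hvA, sin_zero, mul_zero, zero_mul, add_zero]
  rw [hqA, zero_pow two_ne_zero, zero_div, div_eq_zero_iff] at hconst
  exact pow_eq_zero_iff two_ne_zero |>.1 (hconst.resolve_right (hpos x hx).ne')

theorem exists_eq_zero_of_integral_rotRate {X : Type*} [TopologicalSpace X] [PreconnectedSpace X]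
    (hAB : A ≤ B) {a : X → ℝ} {y v P Q : X → ℝ → ℝ}
    (hy : ∀ z, ∀ x ∈ Icc A B, HasDerivWithinAt (y z) (P z x) (Icc A B) x)
    (hv : ∀ z, ∀ x ∈ Icc A B, HasDerivWithinAt (v z) (-Q z x) (Icc A B) x)
    (hvA : ∀ z, v z A = 0) (hpos : ∀ z, ∀ x ∈ Icc A B, 0 < (a z * y z x) ^ 2 + v z x ^ 2)
    (hrot : ContinuousOn (fun q : X × ℝ =>
      rotRate (a q.1) (y q.1 q.2) (v q.1 q.2) (P q.1 q.2) (Q q.1 q.2)) (univ ×ˢ Icc A B))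
    {z₀ z₁ : X} (hgap : (∫ x in A..B, rotRate (a z₀) (y z₀ x) (v z₀ x) (P z₀ x) (Q z₀ x)) + π ≤
      ∫ x in A..B, rotRate (a z₁) (y z₁ x) (v z₁ x) (P z₁ x) (Q z₁ x)) :
    ∃ z, v z B = 0 := by
  set ρ : X → ℝ → ℝ := fun z x =>
    rotRate (a z) (y z x) (v z x) (P z x) (Q z x)
  set r : X → ℝ → ℝ := fun z x => ρ z (projIcc A B hAB x)
  have hrc : Continuous (Function.uncurry r) :=
    hrot.comp_continuous (f := fun q : X × ℝ => (q.1, (projIcc A B hAB q.2 : ℝ))) (by fun_prop)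
      fun q => ⟨mem_univ _, Subtype.coe_prop _⟩
  have hr : ∀ z, ∀ x ∈ Icc A B, r z x = ρ z x := fun z x hx => by
    simp only [r, projIcc_of_mem hAB hx]
  have hint : ∀ z, ∫ x in A..B, r z x = ∫ x in A..B, ρ z x := fun z =>
    intervalIntegral.integral_congr fun x hx => hr z x (by rwa [uIcc_of_le hAB] at hx)
  have hcont : Continuous fun z => ∫ x in A..B, r z x :=
    intervalIntegral.continuous_parametric_intervalIntegral_of_continuous' hrc A B
  obtain ⟨k, hk, -⟩ := existsUnique_add_zsmul_mem_Ico pi_pos 0 (∫ x in A..B, ρ z₀ x)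
  rw [zero_add, zsmul_eq_mul] at hk
  obtain ⟨z, hz⟩ := mem_range_of_exists_le_of_exists_ge hcont
    ⟨z₀, (hint z₀).trans_le hk.1⟩ ⟨z₁, (hk.2.le.trans hgap).trans_eq (hint z₁).symm⟩
  have hrz : Continuous (r z) := hrc.comp (Continuous.prodMk_right z)
  refine ⟨z, ?_⟩
  have hzero := mul_sin_add_mul_cos_eq_zero (hy z) (hv z) (θ := fun x => ∫ t in A..x, r z t)
    (fun x hx => ((hrz.integral_hasStrictDerivAt A x).hasDerivAt.congr_deriv
      (hr z x hx)).hasDerivWithinAt)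
    (hpos z) intervalIntegral.integral_same (hvA z) (right_mem_Icc.2 hAB)
  have hz : ∫ t in A..B, r z t = k * π := hz
  rw [hz, sin_int_mul_pi, mul_zero, zero_add] at hzero
  refine (mul_eq_zero.1 hzero).resolve_right ?_
  rw [← ne_eq, ← abs_pos, abs_cos_int_mul_pi]
  exact one_pos

theorem integral_add_le_integral {f g : ℝ → ℝ} {T k l e : ℝ} (hAT : A ≤ T) (hTB : T ≤ B)
    (hf : ContinuousOn f (Icc A B)) (hg : ContinuousOn g (Icc A B))
    (hfk : ∀ x ∈ Icc A B, f x ≤ k) (hg0 : ∀ x ∈ Icc A B, 0 ≤ g x)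
    (hgl : ∀ x ∈ Icc T B, l ≤ g x) (hkl : k * (B - A) + e ≤ l * (B - T)) :
    (∫ x in A..B, f x) + e ≤ ∫ x in A..B, g x := by
  have hAB := hAT.trans hTB
  have hgi₁ : IntervalIntegrable g MeasureTheory.volume A T :=
    (hg.mono (Icc_subset_Icc_right hTB)).intervalIntegrable_of_Icc hAT
  have hgi₂ : IntervalIntegrable g MeasureTheory.volume T B :=
    (hg.mono (Icc_subset_Icc_left hAT)).intervalIntegrable_of_Icc hTB
  have hupper : ∫ x in A..B, f x ≤ ∫ _ in A..B, k :=
    intervalIntegral.integral_mono_on hAB (hf.intervalIntegrable_of_Icc hAB)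
      intervalIntegrable_const hfk
  have hleft : 0 ≤ ∫ x in A..T, g x :=
    intervalIntegral.integral_nonneg hAT fun x hx => hg0 x ⟨hx.1, hx.2.trans hTB⟩
  have hright : ∫ _ in T..B, l ≤ ∫ x in T..B, g x :=
    intervalIntegral.integral_mono_on hTB intervalIntegrable_const hgi₂ hgl
  rw [intervalIntegral.integral_const, smul_eq_mul] at hupper hright
  rw [← intervalIntegral.integral_add_adjacent_intervals hgi₁ hgi₂]
  linarith

end Pruefer

section Rotation

variable {ψ h w : ℝ → ℝ} {A B c η : ℝ} {C : ℝ≥0}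

theorem IsRestoring.le_rotRate_of_steep (hh : IsRestoring h C c η) {P a y v w l M X G : ℝ}
    (ha : 0 < a) (hpos : 0 < y ^ 2 + v ^ 2) (hy : |y| ≤ η) (hl : 0 < l) (hlw : l ≤ w)
    (hwM : w ≤ M) (hX0 : 0 ≤ X) (hX : X * (v / w) ^ 2 ≤ v / w * P) (hGX : G * M ≤ a * X)
    (hGl : G * a ≤ c * l) : G ≤ rotRate a y v P (w * h y) := by
  have hc := hh.c_pos
  have hw : 0 < w := hl.trans_le hlw
  have hM : 0 < M := hw.trans_le hwM
  refine le_rotRate (mul_sq_add_sq_pos ha hpos) ?_ ?_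
  · calc G * (a * y) ^ 2 = G * a * (a * y ^ 2) := by ring
      _ ≤ c * l * (a * y ^ 2) := by gcongr
      _ ≤ c * w * (a * y ^ 2) := by gcongr
      _ = a * w * (c * y ^ 2) := by ring
      _ ≤ a * w * (y * h y) := mul_le_mul_of_nonneg_left (hh.mul_sq_le hy) (by positivity)
      _ = a * (y * (w * h y)) := by ring
  · calc G * v ^ 2 ≤ a * X / M * v ^ 2 := by gcongr; rwa [le_div_iff₀ hM]
      _ ≤ a * X / w * v ^ 2 := by gcongr
      _ = a * w * (X * (v / w) ^ 2) := by field_simp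
      _ ≤ a * w * (v / w * P) := by gcongr
      _ = a * (v * P) := by field_simp

theorem rotRate_nonneg {y v : ℝ → ℝ} (hψ : IsFluxLaw ψ)
    (hh : IsRestoring h C c η) {a x : ℝ} (ha : 0 ≤ a) (hw : 0 < w x) :
    0 ≤ rotRate a (y x) (v x) (ψ (v x / w x)) (w x * h (y x)) := by
  have hkin : 0 ≤ v x * ψ (v x / w x) := by
    have := mul_nonneg hw.le (hψ.mul_nonneg (v x / w x))
    rwa [← mul_assoc, mul_div_cancel₀ _ hw.ne'] at this
  have hel : 0 ≤ y x * (w x * h (y x)) := by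
    rw [mul_left_comm]
    exact mul_nonneg hw.le (hh.mul_nonneg (y x))
  unfold rotRate
  positivity

theorem IsSol.exists_rotRate_le (hAB : A < B) (hh : IsRestoring h C c η) {w₀ : ℝ → ℝ} {M d : ℝ}
    (hw₀ : ∀ x ∈ Ioc A B, 0 < w₀ x) (hM : 0 < M) (hd : 0 < d) :
    ∃ G, ∀ ψ w y v, IsFluxLaw ψ → IsWeightBetween w₀ M w A B → IsSol ψ h w A B y v →
      y A = d → ∀ x ∈ Icc A B, rotRate 1 (y x) (v x) (ψ (v x / w x)) (w x * h (y x)) ≤ G := by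
  obtain ⟨m, hm, hmle⟩ := IsSol.exists_le_sq_add_sq hAB hh hw₀ hM hd
  have hc := hh.c_pos
  have hη := hh.η_pos
  set s := C * η * (B - A) with hs
  refine ⟨(M * (s * (1 + s)) + M * (C * (C * d ^ 2 / c))) / m, ?_⟩
  intro ψ w y v hψ hw hsol hyA x hx
  have hwx := hw.pos hx
  have hslope : |v x / w x| ≤ s := by
    refine (hsol.abs_slope_le hw.monotoneOn hw.left_pos.le
      (fun t _ => hh.abs_le_const _) hx).trans ?_
    rw [hs]
    gcongr
    exact hx.2
  have hkin : v x / w x * ψ (v x / w x) ≤ s * (1 + s) := by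
    refine (le_abs_self _).trans ?_
    rw [abs_mul]
    gcongr
    exact (hψ.abs_le _).trans (by gcongr)
  have hel : y x * h (y x) ≤ C * (C * d ^ 2 / c) := by
    have hE := hsol.min_mul_abs_profile_le hψ hh hw.toIsWeight hx
    rw [hyA, ← le_div_iff₀' hc] at hE
    calc y x * h (y x) ≤ |y x| * |h (y x)| := (le_abs_self _).trans_eq (abs_mul _ _)
      _ ≤ |y x| * (C * min |y x| η) := by gcongr; exact hh.abs_le _
      _ = C * (min |y x| η * |y x|) := by ring
      _ ≤ C * (C * d ^ 2 / c) := by gcongr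
  have hnum : 1 * (v x * ψ (v x / w x) + y x * (w x * h (y x))) =
      w x * (v x / w x * ψ (v x / w x)) + w x * (y x * h (y x)) := by field_simp
  rw [rotRate, hnum, one_mul]
  have := hw.upper x hx
  have := hψ.mul_nonneg (v x / w x)
  have := hh.mul_nonneg (y x)
  gcongr
  exact hmle ψ w y v hψ hw hsol hyA x hx

end Rotation

section Clamp

/-- Projection of the real line onto `[-S, S]`. -/
def clamp (S x : ℝ) : ℝ := max (-S) (min S x)

variable {S x : ℝ}

theorem clamp_mem_Icc (hS : 0 ≤ S) (x : ℝ) : clamp S x ∈ Icc (-S) S :=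
  ⟨le_max_left _ _, max_le (neg_le_self hS) (min_le_left _ _)⟩

theorem clamp_of_abs_le (hx : |x| ≤ S) : clamp S x = x := by
  rw [clamp, min_eq_right (abs_le.1 hx).2, max_eq_right (abs_le.1 hx).1]

theorem abs_clamp (hS : 0 ≤ S) (x : ℝ) : |clamp S x| = min |x| S := by
  unfold clamp
  grind

theorem mul_clamp (hS : 0 ≤ S) (x : ℝ) : x * clamp S x = min |x| S * |x| := by
  have hsign : x * clamp S x = |x * clamp S x| := by
    refine (abs_of_nonneg ?_).symm
    unfold clamp
    rcases le_total 0 x with hx | hx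
    · exact mul_nonneg hx (le_max_of_le_right (le_min hS hx))
    · exact mul_nonneg_of_nonpos_of_nonpos hx
        (max_le (neg_nonpos.2 hS) ((min_le_right _ _).trans hx))
  rw [hsign, abs_mul, abs_clamp hS, mul_comm]

theorem lipschitzWith_clamp (S : ℝ) : LipschitzWith 1 (clamp S) :=
  (LipschitzWith.id.const_min S).const_max (-S)

theorem lipschitzWith_comp_clamp {f : ℝ → ℝ} {K : ℝ≥0} (hS : 0 ≤ S)
    (hf : LipschitzOnWith K f (Icc (-S) S)) : LipschitzWith K fun x => f (clamp S x) := by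
  rw [← lipschitzOnWith_univ, ← mul_one K]
  exact hf.comp (lipschitzWith_clamp S).lipschitzOnWith fun x _ => clamp_mem_Icc hS x

end Clamp

section Flow

theorem exists_flow_of_lipschitz {E : Type*} [NormedAddCommGroup E] [NormedSpace ℝ E]
    [CompleteSpace E] {F : ℝ → E → E} {A B : ℝ} (hAB : A ≤ B) {K L : ℝ≥0}
    (hlip : ∀ t ∈ Icc A B, LipschitzWith K (F t)) (hcont : ∀ z, ContinuousOn (F · z) (Icc A B))
    (hle : ∀ t ∈ Icc A B, ∀ z, ‖F t z‖ ≤ L) (b : ℝ≥0) :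
    ∃ Φ : E × ℝ → E, (∀ z ∈ Metric.closedBall 0 b, Φ (z, A) = z ∧
        ∀ t ∈ Icc A B, HasDerivWithinAt (fun t => Φ (z, t)) (F t (Φ (z, t))) (Icc A B) t) ∧
      ContinuousOn Φ (Metric.closedBall 0 b ×ˢ Icc A B) := by
  have hpl : IsPicardLindelof F (⟨A, left_mem_Icc.2 hAB⟩ : Icc A B) (0 : E)
      (b + L * NNReal.mk (B - A) (sub_nonneg.2 hAB)) b L K :=
    { lipschitzOnWith := fun t ht => (hlip t ht).lipschitzOnWith
      continuousOn := fun z _ => hcont z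
      norm_le := fun t ht z _ => hle t ht z
      mul_max_le := by
        push_cast
        rw [sub_self, max_eq_left (sub_nonneg.2 hAB), add_sub_cancel_left] }
  exact hpl.exists_forall_mem_closedBall_eq_hasDerivWithinAt_continuousOn

variable {ψ h w : ℝ → ℝ} {A B c η : ℝ} {C : ℝ≥0}

theorem lipschitzWith_sol_field {K W a : ℝ≥0} {ω : ℝ} (hψ : LipschitzWith K ψ)
    (hh : LipschitzWith C h) (hω : 0 < ω) (ha : 0 < a) (haω : a ≤ ω) (hωW : ω ≤ W) :
    LipschitzWith (max (K * a⁻¹) (W * C))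
      fun z : ℝ × ℝ => (ψ (z.2 / ω), -(ω * h z.1)) := by
  refine LipschitzWith.prodMk ?_ ?_
  · refine hψ.comp (LipschitzWith.of_dist_le_mul fun z z' => ?_)
    rw [Real.dist_eq, ← sub_div, abs_div, abs_of_pos hω, div_eq_inv_mul]
    push_cast
    gcongr
    exact le_max_right _ _
  · refine LipschitzWith.of_dist_le_mul fun z z' => ?_
    rw [dist_neg_neg, Real.dist_eq, ← mul_sub, abs_mul, abs_of_pos hω, NNReal.coe_mul, mul_assoc]
    gcongr
    exact (hh.dist_le_mul z.1 z'.1).trans (by gcongr; exact le_max_left _ _)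

theorem exists_sol_flow_of_lipschitz (hAB : A ≤ B) {K L : ℝ≥0} (hψ : LipschitzWith K ψ)
    (hψL : ∀ s, |ψ s| ≤ L) (hh : IsRestoring h C c η) (hw : IsWeight w A B) (b : ℝ≥0) :
    ∃ Y V : ℝ → ℝ → ℝ, (∀ d ∈ Icc (-b : ℝ) b, IsSol ψ h w A B (Y d) (V d) ∧ Y d A = d) ∧
      ContinuousOn (Function.uncurry Y) (Icc (-b : ℝ) b ×ˢ Icc A B) ∧
      ContinuousOn (Function.uncurry V) (Icc (-b : ℝ) b ×ˢ Icc A B) := by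
  have hη := hh.η_pos
  have hB : B ∈ Icc A B := right_mem_Icc.2 hAB
  have hwB : ∀ t ∈ Icc A B, w t ≤ w B := fun t ht => hw.monotoneOn ht hB ht.2
  set a : ℝ≥0 := NNReal.mk (w A) hw.left_pos.le
  set W : ℝ≥0 := NNReal.mk (w B) (hw.pos hB).le
  obtain ⟨Φ, hΦ, hΦc⟩ := exists_flow_of_lipschitz hAB
    (F := fun t z => (ψ (z.2 / w t), -(w t * h z.1))) (K := max (K * a⁻¹) (W * C))
    (L := max L (W * (C * NNReal.mk η hη.le)))
    (fun t ht => lipschitzWith_sol_field hψ hh.lipschitz (hw.pos ht) (a := a) hw.left_pos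
      (hw.monotoneOn (left_mem_Icc.2 hAB) ht ht.1) (hwB t ht))
    (fun z => (hψ.continuous.comp_continuousOn (continuousOn_const.div
      hw.differentiableOn.continuousOn fun t ht => (hw.pos ht).ne')).prodMk
      (hw.differentiableOn.continuousOn.mul continuousOn_const).neg)
    (fun t ht z => by
      rw [Prod.norm_def, NNReal.coe_max]
      refine max_le_max (hψL _) ?_
      rw [norm_neg, norm_mul, Real.norm_of_nonneg (hw.pos ht).le]
      exact mul_le_mul (hwB t ht) (hh.abs_le_const _) (norm_nonneg _) (hw.pos hB).le) b
  have hmem : ∀ d ∈ Icc (-b : ℝ) b, ((d, 0) : ℝ × ℝ) ∈ Metric.closedBall 0 b := fun d hd => by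
    simpa [Prod.norm_def] using abs_le.2 hd
  have hcont : ContinuousOn (fun z : ℝ × ℝ => Φ ((z.1, 0), z.2)) (Icc (-b : ℝ) b ×ˢ Icc A B) :=
    hΦc.comp (by fun_prop) fun z hz => ⟨hmem _ hz.1, hz.2⟩
  refine ⟨fun d x => (Φ ((d, 0), x)).1, fun d x => (Φ ((d, 0), x)).2, fun d hd => ?_,
    hcont.fst, hcont.snd⟩
  obtain ⟨hinit, hderiv⟩ := hΦ _ (hmem d hd)
  exact ⟨{ profile := fun x hx => (hderiv x hx).fst
           flux := fun x hx => (hderiv x hx).snd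
           flux_left := congrArg Prod.snd hinit }, congrArg Prod.fst hinit⟩

theorem exists_sol_flow (hAB : A ≤ B) (hψ : IsFluxLaw ψ) (hψ' : ContDiff ℝ 1 ψ)
    (hh : IsRestoring h C c η) (hw : IsWeight w A B) (b : ℝ≥0) :
    ∃ Y V : ℝ → ℝ → ℝ, (∀ d ∈ Icc (-b : ℝ) b, IsSol ψ h w A B (Y d) (V d) ∧ Y d A = d) ∧
      ContinuousOn (Function.uncurry Y) (Icc (-b : ℝ) b ×ˢ Icc A B) ∧
      ContinuousOn (Function.uncurry V) (Icc (-b : ℝ) b ×ˢ Icc A B) := by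
  have hη := hh.η_pos
  set S := C * η * (B - A)
  have hS : 0 ≤ S := by positivity
  obtain ⟨K, hK⟩ := hψ'.contDiffOn.exists_lipschitzOnWith one_ne_zero (convex_Icc (-S) S)
    isCompact_Icc
  -- Slopes of solutions are bounded by `S`, so truncating the law there changes nothing.
  obtain ⟨Y, V, hYV, hY, hV⟩ := exists_sol_flow_of_lipschitz hAB (lipschitzWith_comp_clamp hS hK)
    (L := NNReal.mk (1 + S) (by positivity)) (fun s => (hψ.abs_le _).trans
      (add_le_add_right (abs_le.2 (clamp_mem_Icc hS s)) 1)) hh hw b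
  refine ⟨Y, V, fun d hd => ?_, hY, hV⟩
  obtain ⟨hs, hd⟩ := hYV d hd
  refine ⟨{ hs with profile := fun x hx => (hs.profile x hx).congr_deriv ?_ }, hd⟩
  rw [clamp_of_abs_le]
  refine (hs.abs_slope_le hw.monotoneOn hw.left_pos.le (fun t _ => hh.abs_le_const _) hx).trans ?_
  exact mul_le_mul_of_nonneg_left (sub_le_sub_right hx.2 A) (by positivity)

end Flow

section Shooting

variable {ψ h w w₀ : ℝ → ℝ} {A B R c d d' κ η M : ℝ} {C : ℝ≥0} {y v : ℝ → ℝ}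

theorem IsWeight.mono (hw : IsWeight w A B) (hRB : R ≤ B) : IsWeight w A R :=
  { hw with
    differentiableOn := hw.differentiableOn.mono (Icc_subset_Icc_right hRB)
    monotoneOn := hw.monotoneOn.mono (Icc_subset_Icc_right hRB) }

theorem IsWeightBetween.mono (hw : IsWeightBetween w₀ M w A B) (hRB : R ≤ B) :
    IsWeightBetween w₀ M w A R :=
  { hw.toIsWeight.mono hRB with
    lower := fun x hx => hw.lower x (Ioc_subset_Ioc_right hRB hx)
    upper := fun x hx => hw.upper x (Icc_subset_Icc_right hRB hx) }

theorem IsSol.mono (hs : IsSol ψ h w A B y v) (hRB : R ≤ B) : IsSol ψ h w A R y v where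
  profile x hx := (hs.profile x (Icc_subset_Icc_right hRB hx)).mono (Icc_subset_Icc_right hRB)
  flux x hx := (hs.flux x (Icc_subset_Icc_right hRB hx)).mono (Icc_subset_Icc_right hRB)
  flux_left := hs.flux_left

theorem IsSol.sq_add_sq_pos (hs : IsSol ψ h w A B y v) (hAB : A < B) (hψ : IsFluxLaw ψ)
    (hh : IsRestoring h C c η) (hw : IsWeight w A B) (hyA : 0 < y A) {x : ℝ}
    (hx : x ∈ Icc A B) : 0 < y x ^ 2 + v x ^ 2 := by
  have hB : B ∈ Icc A B := right_mem_Icc.2 hAB.le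
  obtain ⟨m, hm, hle⟩ := IsSol.exists_le_sq_add_sq hAB hh
    (fun t ht => hw.pos (Ioc_subset_Icc_self ht)) (hw.pos hB) hyA
  exact hm.trans_le (hle ψ w y v hψ { hw with
    lower := fun t _ => le_rfl
    upper := fun t ht => hw.monotoneOn ht hB ht.2 } hs rfl x hx)

theorem continuousOn_rotRate {E : Type*} [TopologicalSpace E] {S : Set E} {a y v P Q : E → ℝ}
    (ha : ContinuousOn a S) (hy : ContinuousOn y S) (hv : ContinuousOn v S)
    (hP : ContinuousOn P S) (hQ : ContinuousOn Q S)
    (hpos : ∀ z ∈ S, 0 < (a z * y z) ^ 2 + v z ^ 2) :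
    ContinuousOn (fun z => rotRate (a z) (y z) (v z) (P z) (Q z)) S :=
  (ha.mul ((hv.mul hP).add (hy.mul hQ))).div (((ha.mul hy).pow 2).add (hv.pow 2))
    fun z hz => (hpos z hz).ne'

theorem continuousOn_rotRate_comp {E : Type*} [TopologicalSpace E] {S : Set E} {a y v x : E → ℝ}
    (hψ : Continuous ψ) (hh : Continuous h) (hw : IsWeight w A B) (ha : ContinuousOn a S)
    (hy : ContinuousOn y S) (hv : ContinuousOn v S) (hx : ContinuousOn x S)
    (hxS : MapsTo x S (Icc A B)) (ha0 : ∀ z ∈ S, 0 < a z) (hpos : ∀ z ∈ S, 0 < y z ^ 2 + v z ^ 2) :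
    ContinuousOn
      (fun z => rotRate (a z) (y z) (v z) (ψ (v z / w (x z))) (w (x z) * h (y z))) S := by
  have hwx : ContinuousOn (fun z => w (x z)) S := hw.differentiableOn.continuousOn.comp hx hxS
  exact continuousOn_rotRate ha hy hv
    (hψ.comp_continuousOn (hv.div hwx fun z hz => (hw.pos (hxS hz)).ne'))
    (hwx.mul (hh.comp_continuousOn hy)) fun z hz => mul_sq_add_sq_pos (ha0 z hz) (hpos z hz)

/-- Integral over `[A, R]` of the rotation rate along `(y, v)`, i.e. the increment of the Prüfer
angle measured at scale `a`. -/
noncomputable def totalRotation (ψ h w : ℝ → ℝ) (A R a : ℝ) (y v : ℝ → ℝ) : ℝ :=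
  ∫ x in A..R, rotRate a (y x) (v x) (ψ (v x / w x)) (w x * h (y x))

-- The scale is deformed together with the datum, so that the two ends may be compared at
-- different scales.
theorem exists_flux_eq_zero_of_totalRotation (hAR : A < R) (hRB : R ≤ B) (hψ : IsFluxLaw ψ)
    (hψ' : ContDiff ℝ 1 ψ) (hh : IsRestoring h C c η) (hw : IsWeight w A B) (hd' : 0 < d')
    (hdd' : d' ≤ d) {a a' : ℝ} (ha : 0 < a) (ha' : 0 < a')
    (hgap : ∀ y v y' v', IsSol ψ h w A B y v → y A = d → IsSol ψ h w A B y' v' → y' A = d' →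
      totalRotation ψ h w A R a y v + π ≤ totalRotation ψ h w A R a' y' v') :
    ∃ y v, IsSol ψ h w A B y v ∧ y A ∈ Icc d' d ∧ v R = 0 := by
  have hd : 0 ≤ d := (hd'.trans_le hdd').le
  obtain ⟨Y, V, hs, hY, hV⟩ := exists_sol_flow (hAR.le.trans hRB) hψ hψ' hh hw (NNReal.mk d hd)
  set Z : Set (ℝ × ℝ) := Icc d' d ×ˢ Ioi 0
  have : PreconnectedSpace Z :=
    Subtype.preconnectedSpace ((convex_Icc d' d).prod (convex_Ioi 0)).isPreconnected
  have hmem : ∀ z : Z, z.1.1 ∈ Icc (-d) d := fun z =>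
    ⟨by linarith [z.2.1.1], z.2.1.2⟩
  have hsub : MapsTo (fun q : Z × ℝ => (q.1.1.1, q.2)) (univ ×ˢ Icc A R)
      (Icc (-d) d ×ˢ Icc A B) := fun q hq => ⟨hmem q.1, hq.2.1, hq.2.2.trans hRB⟩
  have hpos : ∀ z : Z, ∀ x ∈ Icc A R, 0 < Y z.1.1 x ^ 2 + V z.1.1 x ^ 2 := fun z x hx => by
    refine ((hs _ (hmem z)).1.mono hRB).sq_add_sq_pos hAR hψ hh (hw.mono hRB) ?_ hx
    rw [(hs _ (hmem z)).2]
    exact hd'.trans_le z.2.1.1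
  obtain ⟨z, hz⟩ := exists_eq_zero_of_integral_rotRate (X := Z) hAR.le (a := fun z => z.1.2)
    (y := fun z => Y z.1.1) (v := fun z => V z.1.1)
    (P := fun z x => ψ (V z.1.1 x / w x)) (Q := fun z x => w x * h (Y z.1.1 x))
    (z₀ := ⟨(d, a), ⟨hdd', le_rfl⟩, ha⟩) (z₁ := ⟨(d', a'), ⟨le_rfl, hdd'⟩, ha'⟩)
    (fun z => ((hs _ (hmem z)).1.mono hRB).profile)
    (fun z => ((hs _ (hmem z)).1.mono hRB).flux)
    (fun z => (hs _ (hmem z)).1.flux_left)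
    (fun z x hx => mul_sq_add_sq_pos z.2.2 (hpos z x hx))
    (continuousOn_rotRate_comp hψ.continuous hh.lipschitz.continuous (hw.mono hRB)
      (by fun_prop) (hY.comp (by fun_prop) hsub) (hV.comp (by fun_prop) hsub)
      continuousOn_snd (fun q hq => hq.2) (fun q _ => q.1.2.2) fun q hq => hpos q.1 q.2 hq.2)
    (hgap _ _ _ _ (hs d ⟨by linarith, le_rfl⟩).1 (hs d ⟨by linarith, le_rfl⟩).2
      (hs d' ⟨by linarith, hdd'⟩).1 (hs d' ⟨by linarith, hdd'⟩).2)
  refine ⟨Y z.1.1, V z.1.1, (hs _ (hmem z)).1, ?_, hz⟩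
  rw [(hs _ (hmem z)).2]
  exact z.2.1

theorem IsSol.totalRotation_add_le (hs : IsSol ψ h w A B y v) {y' v' : ℝ → ℝ}
    (hs' : IsSol ψ h w A B y' v') (hψ : IsFluxLaw ψ) (hh : IsRestoring h C c η)
    (hw : IsWeight w A B) (hyA : 0 < y A) (hyA' : 0 < y' A) {T a a' G G' e : ℝ} (ha : 0 < a)
    (ha' : 0 < a') (hT : T ∈ Ioo A B)
    (hG : ∀ x ∈ Icc A B, rotRate a (y x) (v x) (ψ (v x / w x)) (w x * h (y x)) ≤ G)
    (hG' : ∀ x ∈ Icc T B, G' ≤ rotRate a' (y' x) (v' x) (ψ (v' x / w x)) (w x * h (y' x)))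
    (he : G * (B - A) + e ≤ G' * (B - T)) :
    totalRotation ψ h w A B a y v + e ≤ totalRotation ψ h w A B a' y' v' := by
  have hAB := hT.1.trans hT.2
  have hcont : ∀ {b : ℝ} {y v : ℝ → ℝ}, 0 < b → IsSol ψ h w A B y v → 0 < y A → ContinuousOn
      (fun x => rotRate b (y x) (v x) (ψ (v x / w x)) (w x * h (y x))) (Icc A B) :=
    fun hb hs hyA => continuousOn_rotRate_comp hψ.continuous hh.lipschitz.continuous hw
      continuousOn_const hs.continuousOn_profile hs.continuousOn_flux continuousOn_id
      (mapsTo_id _) (fun _ _ => hb) fun x hx => hs.sq_add_sq_pos hAB hψ hh hw hyA hx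
  exact integral_add_le_integral hT.1.le hT.2.le (hcont ha hs hyA) (hcont ha' hs' hyA') hG
    (fun x hx => rotRate_nonneg hψ hh ha'.le (hw.pos hx)) hG' he

theorem IsSol.le_rotRate_of_steep (hs : IsSol ψ h w A B y v) (hAB : A < B) (hψ : IsFluxLaw ψ)
    (hh : IsRestoring h C c η) (hw : IsWeightBetween w₀ M w A B) (hyA : 0 < y A)
    (hyAη : C * y A ^ 2 ≤ c * η ^ 2) (hyAκ : C * √(C / c) * y A * (B - A) ≤ κ) {a G T X : ℝ}
    (hT : T ∈ Ioc A B) (ha : 0 < a) (hT₀ : 0 < w₀ T) (hX0 : 0 ≤ X)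
    (hX : ∀ s, |s| ≤ κ → X * s ^ 2 ≤ s * ψ s) (hGX : G * M ≤ a * X) (hGl : G * a ≤ c * w₀ T)
    {x : ℝ} (hx : x ∈ Icc T B) :
    G ≤ rotRate a (y x) (v x) (ψ (v x / w x)) (w x * h (y x)) := by
  have hx' : x ∈ Icc A B := ⟨hT.1.le.trans hx.1, hx.2⟩
  refine hh.le_rotRate_of_steep ha (hs.sq_add_sq_pos hAB hψ hh hw.toIsWeight hyA hx')
    (hs.abs_profile_le hψ hh hw.toIsWeight hyAη hx') hT₀ ?_ (hw.upper x hx') hX0 (hX _ ?_) hGX hGl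
  · exact (hw.lower T hT).trans (hw.monotoneOn (Ioc_subset_Icc_self hT) hx' hx.1)
  · have hk : ∀ t ∈ Icc A B, |h (y t)| ≤ C * √(C / c) * y A := fun t ht => by
      simpa only [abs_of_pos hyA] using hs.abs_force_le hψ hh hw.toIsWeight hyAη ht
    refine (hs.abs_slope_le hw.monotoneOn hw.left_pos.le hk hx').trans (le_trans ?_ hyAκ)
    gcongr
    exact hx.2

theorem IsSol.exists_le_rotRate (hAB : A < B) (hh : IsRestoring h C c η) {T G : ℝ}
    (hT : T ∈ Ioc A B) (hT₀ : 0 < w₀ T) (hM : 0 < M) (hd : 0 < d) (hdη : C * d ^ 2 ≤ c * η ^ 2)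
    (hG : 0 < G) :
    ∃ a > 0, ∃ X, ∀ κ > 0, ∃ d' ∈ Ioc 0 d, ∀ ψ w y v, IsFluxLaw ψ →
      (∀ s, |s| ≤ κ → X * s ^ 2 ≤ s * ψ s) → IsWeightBetween w₀ M w A B → IsSol ψ h w A B y v →
        y A = d' → ∀ x ∈ Icc T B, G ≤ rotRate a (y x) (v x) (ψ (v x / w x)) (w x * h (y x)) := by
  have hc := hh.c_pos
  have hC := hh.C_pos
  set a := c * w₀ T / G
  have ha : 0 < a := by positivity
  refine ⟨a, ha, G * M / a, fun κ hκ => ?_⟩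
  set S := C * √(C / c) * (B - A)
  have hS : 0 < S := by positivity
  refine ⟨min d (κ / S), ⟨by positivity, min_le_left _ _⟩, ?_⟩
  intro ψ w y v hψ hX hw hs hyA x hx
  have hyA0 : 0 < y A := hyA ▸ by positivity
  have hyAd : y A ≤ d := hyA ▸ min_le_left _ _
  have hyAκ : C * √(C / c) * y A * (B - A) ≤ κ := by
    rw [mul_right_comm, ← le_div_iff₀' hS, hyA]
    exact min_le_right _ _
  exact hs.le_rotRate_of_steep hAB hψ hh hw hyA0 (le_trans (by gcongr) hdη) hyAκ hT ha hT₀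
    (by positivity) hX (mul_div_cancel₀ _ ha.ne').ge (mul_div_cancel₀ _ hG.ne').le hx

theorem exists_shooting (hAR : A < R) (hRB : R ≤ B) (hh : IsRestoring h C c η)
    (hw₀ : ∀ x ∈ Ioc A B, 0 < w₀ x) (hM : 0 < M) (hd : 0 < d) (hdη : C * d ^ 2 ≤ c * η ^ 2) :
    ∃ X, ∀ κ > 0, ∃ d' ∈ Ioc 0 d, ∀ ψ w, IsFluxLaw ψ → ContDiff ℝ 1 ψ →
      (∀ s, |s| ≤ κ → X * s ^ 2 ≤ s * ψ s) → IsWeightBetween w₀ M w A B →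
        ∃ y v, IsSol ψ h w A B y v ∧ y A ∈ Icc d' d ∧ v R = 0 := by
  have hw₀R : ∀ x ∈ Ioc A R, 0 < w₀ x := fun x hx => hw₀ x (Ioc_subset_Ioc_right hRB hx)
  obtain ⟨G, hG⟩ := IsSol.exists_rotRate_le hAR hh hw₀R hM hd
  obtain ⟨T, hT⟩ := exists_between hAR
  have hT' : T ∈ Ioc A R := ⟨hT.1, hT.2.le⟩
  have hRT : 0 < R - T := sub_pos.2 hT.2
  set G' := (|G| * (R - A) + π) / (R - T)
  have hgap : G * (R - A) + π ≤ G' * (R - T) := by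
    rw [div_mul_cancel₀ _ hRT.ne']
    gcongr
    exact le_abs_self G
  obtain ⟨a, ha, X, hX⟩ := IsSol.exists_le_rotRate (G := G') hAR hh hT' (hw₀R T hT') hM hd hdη
    (div_pos (by positivity) hRT)
  refine ⟨X, fun κ hκ => ?_⟩
  obtain ⟨d', hd', hG'⟩ := hX κ hκ
  refine ⟨d', hd', fun ψ w hψ hψ' hsteep hw => ?_⟩
  refine exists_flux_eq_zero_of_totalRotation hAR hRB hψ hψ' hh hw.toIsWeight hd'.1 hd'.2 one_pos
    ha fun y v y' v' hs hyA hs' hyA' => ?_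
  have hwR := hw.mono hRB
  exact (hs.mono hRB).totalRotation_add_le (hs'.mono hRB) hψ hh hwR.toIsWeight (hyA ▸ hd)
    (hyA' ▸ hd'.1) one_pos ha hT (hG ψ w y v hψ hwR (hs.mono hRB) hyA)
    (hG' ψ w y' v' hψ hsteep hwR (hs'.mono hRB) hyA') hgap

end Shooting

section Limit

variable {h w₀ : ℝ → ℝ} {A B R c d η M α : ℝ} {C : ℝ≥0}

theorem exists_subseq_tendsto_of_lipschitz {E : Type*} [MetricSpace E] [ProperSpace E]
    (hAB : A ≤ B) {F : ℕ → ℝ → E} {z : E} {L : ℝ≥0}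
    (hM : ∀ k, ∀ x ∈ Icc A B, F k x ∈ Metric.closedBall z M)
    (hL : ∀ k, LipschitzOnWith L (F k) (Icc A B)) :
    ∃ G : ℝ → E, ContinuousOn G (Icc A B) ∧ ∃ φ : ℕ → ℕ, StrictMono φ ∧
      ∀ x ∈ Icc A B, Tendsto (fun k => F (φ k) x) atTop (𝓝 (G x)) := by
  have hlip : ∀ k, LipschitzWith L (fun x : Icc A B => F k x) := fun k => (hL k).to_restrict
  set b : ℕ → BoundedContinuousFunction (Icc A B) E := fun k =>
    BoundedContinuousFunction.mkOfCompact ⟨fun x => F k x, (hlip k).continuous⟩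
  have hequi : Equicontinuous ((↑) : range b → Icc A B → E) := by
    refine (LipschitzWith.uniformEquicontinuous _ L ?_).equicontinuous
    rintro ⟨_, k, rfl⟩
    exact hlip k
  have hcomp := BoundedContinuousFunction.arzela_ascoli (Metric.closedBall z M)
    (isCompact_closedBall z M) (range b) (by rintro _ x ⟨k, rfl⟩; exact hM k x x.2) hequi
  obtain ⟨g, -, φ, hφ, hg⟩ := hcomp.tendsto_subseq fun k => subset_closure (mem_range_self k)
  refine ⟨IccExtend hAB g, g.continuous.Icc_extend'.continuousOn, φ, hφ, fun x hx => ?_⟩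
  rw [IccExtend_of_mem hAB _ hx]
  exact (BoundedContinuousFunction.tendsto_iff_tendstoUniformly.1 hg).tendsto_at ⟨x, hx⟩

theorem hasDerivWithinAt_of_tendsto {F f : ℕ → ℝ → ℝ} {G g : ℝ → ℝ} {L : ℝ}
    (hF : ∀ k, ∀ x ∈ Icc A B, HasDerivWithinAt (F k) (f k x) (Icc A B) x)
    (hf : ∀ k, ContinuousOn (f k) (Icc A B)) (hfL : ∀ k, ∀ x ∈ Icc A B, |f k x| ≤ L)
    (hFG : ∀ x ∈ Icc A B, Tendsto (F · x) atTop (𝓝 (G x)))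
    (hfg : ∀ x ∈ Ioc A B, Tendsto (f · x) atTop (𝓝 (g x))) (hg : ContinuousOn g (Icc A B))
    {x : ℝ} (hx : x ∈ Icc A B) : HasDerivWithinAt G (g x) (Icc A B) x := by
  have hAB : A ≤ B := hx.1.trans hx.2
  have hA : A ∈ Icc A B := left_mem_Icc.2 hAB
  have hG : ∀ t ∈ Icc A B, G t = G A + ∫ s in A..t, g s := by
    intro t ht
    have hsub : Icc A t ⊆ Icc A B := Icc_subset_Icc_right ht.2
    have hftc : ∀ k, ∫ s in A..t, f k s = F k t - F k A := fun k =>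
      intervalIntegral.integral_eq_sub_of_hasDerivAt_of_le ht.1
        (fun s hs => (hF k s (hsub hs)).continuousWithinAt.mono hsub)
        (fun s hs => (hF k s (hsub (Ioo_subset_Icc_self hs))).hasDerivAt
          (Icc_mem_nhds hs.1 (hs.2.trans_le ht.2)))
        (((hf k).mono hsub).intervalIntegrable_of_Icc ht.1)
    have hlim : Tendsto (fun k => ∫ s in A..t, f k s) atTop (𝓝 (∫ s in A..t, g s)) := by
      have hIoc : uIoc A t ⊆ Ioc A B := by
        rw [uIoc_of_le ht.1]
        exact Ioc_subset_Ioc_right ht.2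
      exact intervalIntegral.tendsto_integral_filter_of_dominated_convergence (fun _ => L)
        (.of_forall fun k => ((hf k).mono (hIoc.trans Ioc_subset_Icc_self)).aestronglyMeasurable
          measurableSet_uIoc)
        (.of_forall fun k => .of_forall fun s hs => hfL k s (Ioc_subset_Icc_self (hIoc hs)))
        intervalIntegrable_const (.of_forall fun s hs => hfg s (hIoc hs))
    simp only [hftc] at hlim
    rw [tendsto_nhds_unique hlim ((hFG t ht).sub (hFG A hA)), add_sub_cancel]
  have := Fact.mk hx
  have hint : IntervalIntegrable g MeasureTheory.volume A x :=
    (hg.mono (Icc_subset_Icc_right hx.2)).intervalIntegrable_of_Icc hx.1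
  have hmeas : StronglyMeasurableAtFilter g (𝓝[Icc A B] x) MeasureTheory.volume :=
    hg.stronglyMeasurableAtFilter_nhdsWithin measurableSet_Icc x
  exact ((intervalIntegral.integral_hasDerivWithinAt_right hint hmeas (hg x hx)).const_add
    (G A)).congr hG (hG x hx)

theorem continuousOn_div_of_abs_le {v w : ℝ → ℝ} {k : ℝ} (hv : ContinuousOn v (Icc A B))
    (hw : ContinuousOn w (Icc A B)) (hw0 : ∀ x ∈ Ioc A B, w x ≠ 0)
    (hk : ∀ x ∈ Icc A B, |v x / w x| ≤ k * (x - A)) :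
    ContinuousOn (fun x => v x / w x) (Icc A B) := by
  intro x hx
  rcases hx.1.eq_or_lt with rfl | hlt
  · have hA : v A / w A = 0 := by simpa using hk A hx
    rw [ContinuousWithinAt, hA]
    refine squeeze_zero_norm' (a := fun t => k * (t - A))
      (eventually_mem_nhdsWithin.mono hk) ?_
    have : Continuous fun t => k * (t - A) := by fun_prop
    simpa using (this.tendsto A).mono_left nhdsWithin_le_nhds
  · exact (hv x hx).div (hw x hx) (hw0 x ⟨hlt, hx.2⟩)

variable {ψ w Y V : ℕ → ℝ → ℝ} {ψ₀ : ℝ → ℝ}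

theorem continuousOn_div_of_tendsto {v : ℝ → ℝ} {K : ℝ} (hv : ContinuousOn v (Icc A B))
    (hw₀ : ContinuousOn w₀ (Icc A B)) (hw₀' : ∀ x ∈ Ioc A B, w₀ x ≠ 0) (hvA : v A = 0)
    (hlim : ∀ x ∈ Ioc A B, Tendsto (fun k => V k x / w k x) atTop (𝓝 (v x / w₀ x)))
    (hK : ∀ k, ∀ x ∈ Icc A B, |V k x / w k x| ≤ K * (x - A)) :
    ContinuousOn (fun x => v x / w₀ x) (Icc A B) := by
  refine continuousOn_div_of_abs_le (k := K) hv hw₀ hw₀' fun x hx => ?_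
  rcases hx.1.eq_or_lt with rfl | hlt
  · simp [hvA]
  · exact le_of_tendsto' (hlim x ⟨hlt, hx.2⟩).abs fun k => hK k x hx

theorem IsSol.of_tendsto {y v : ℝ → ℝ} (hAB : A ≤ B) (hψ : ∀ k, IsFluxLaw (ψ k))
    (hψ₀ : Continuous ψ₀)
    (hψt : ∀ s, Tendsto (Function.uncurry ψ) (atTop ×ˢ 𝓝 s) (𝓝 (ψ₀ s)))
    (hh : IsRestoring h C c η) (hw : ∀ k, IsWeightBetween w₀ M (w k) A B)
    (hw₀ : ContinuousOn w₀ (Icc A B)) (hw₀' : ∀ x ∈ Ioc A B, 0 < w₀ x)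
    (hwt : ∀ x ∈ Icc A B, Tendsto (w · x) atTop (𝓝 (w₀ x)))
    (hs : ∀ k, IsSol (ψ k) h (w k) A B (Y k) (V k))
    (hy : ContinuousOn y (Icc A B)) (hv : ContinuousOn v (Icc A B))
    (hY : ∀ x ∈ Icc A B, Tendsto (Y · x) atTop (𝓝 (y x)))
    (hV : ∀ x ∈ Icc A B, Tendsto (V · x) atTop (𝓝 (v x))) :
    IsSol ψ₀ h w₀ A B y v := by
  have hA : A ∈ Icc A B := left_mem_Icc.2 hAB
  have hvA : v A = 0 := tendsto_nhds_unique (hV A hA) (by simp [fun k => (hs k).flux_left])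
  have hslope : ∀ x ∈ Ioc A B, Tendsto (fun k => V k x / w k x) atTop (𝓝 (v x / w₀ x)) :=
    fun x hx => (hV x (Ioc_subset_Icc_self hx)).div (hwt x (Ioc_subset_Icc_self hx)) (hw₀' x hx).ne'
  have hslope_cont : ContinuousOn (fun x => v x / w₀ x) (Icc A B) :=
    continuousOn_div_of_tendsto hv hw₀ (fun x hx => (hw₀' x hx).ne') hvA hslope fun k x hx =>
      (hs k).abs_slope_le (hw k).monotoneOn (hw k).left_pos.le (fun t _ => hh.abs_le_const _) hx
  refine ⟨fun x hx => ?_, fun x hx => ?_, hvA⟩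
  · refine hasDerivWithinAt_of_tendsto (fun k => (hs k).profile) (fun k => ?_)
      (fun k x hx => (hs k).abs_deriv_profile_le (hψ k).abs_le hh (hw k).monotoneOn
        (hw k).left_pos.le hx) hY
      (fun x hx => (hψt _).comp (tendsto_id.prodMk (hslope x hx)))
      (hψ₀.comp_continuousOn hslope_cont) hx
    exact (hψ k).continuous.comp_continuousOn ((hs k).continuousOn_flux.div
      (hw k).differentiableOn.continuousOn fun t ht => ((hw k).pos ht).ne')
  · have hcont := hh.lipschitz.continuous
    refine hasDerivWithinAt_of_tendsto (L := M * (C * η)) (fun k => (hs k).flux)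
      (fun k => ((hw k).differentiableOn.continuousOn.mul
        (hcont.comp_continuousOn (hs k).continuousOn_profile)).neg)
      (fun k x hx => ?_) hV
      (fun x hx => ((hwt x (Ioc_subset_Icc_self hx)).mul
        ((hcont.tendsto _).comp (hY x (Ioc_subset_Icc_self hx)))).neg)
      (hw₀.mul (hcont.comp_continuousOn hy)).neg hx
    have hwx := (hw k).pos hx
    rw [abs_neg, abs_mul, abs_of_pos hwx]
    exact mul_le_mul ((hw k).upper x hx) (hh.abs_le_const _) (abs_nonneg _)
      (hwx.le.trans ((hw k).upper x hx))

theorem exists_subseq_tendsto_isSol (hAB : A ≤ B) (hψ : ∀ k, IsFluxLaw (ψ k))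
    (hψ₀ : Continuous ψ₀)
    (hψt : ∀ s, Tendsto (Function.uncurry ψ) (atTop ×ˢ 𝓝 s) (𝓝 (ψ₀ s)))
    (hh : IsRestoring h C c η) (hw : ∀ k, IsWeightBetween w₀ M (w k) A B)
    (hw₀ : ContinuousOn w₀ (Icc A B)) (hw₀' : ∀ x ∈ Ioc A B, 0 < w₀ x)
    (hwt : ∀ x ∈ Icc A B, Tendsto (w · x) atTop (𝓝 (w₀ x)))
    (hs : ∀ k, IsSol (ψ k) h (w k) A B (Y k) (V k)) (hY : ∀ k, ∀ x ∈ Icc A B, |Y k x| ≤ η) :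
    ∃ y v, IsSol ψ₀ h w₀ A B y v ∧ ∃ φ : ℕ → ℕ, StrictMono φ ∧ ∀ x ∈ Icc A B,
      Tendsto (fun k => Y (φ k) x) atTop (𝓝 (y x)) ∧
      Tendsto (fun k => V (φ k) x) atTop (𝓝 (v x)) := by
  have hη := hh.η_pos
  have hA : A ∈ Icc A B := left_mem_Icc.2 hAB
  have hB : B ∈ Icc A B := right_mem_Icc.2 hAB
  have hM : 0 ≤ M := ((hw 0).pos hB).le.trans ((hw 0).upper B hB)
  have hVlip : ∀ k, ∀ x ∈ Icc A B, ∀ x' ∈ Icc A B, |V k x' - V k x| ≤ M * (C * η) * |x' - x| :=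
    fun k x hx x' hx' => ((hs k).abs_flux_sub_le hh (hw k).monotoneOn (hw k).left_pos.le hx
      hx').trans (by gcongr; exact (hw k).upper B hB)
  have hVle : ∀ k, ∀ x ∈ Icc A B, |V k x| ≤ M * (C * η) * (B - A) := fun k x hx => by
    have := hVlip k A hA x hx
    rw [(hs k).flux_left, sub_zero, abs_of_nonneg (sub_nonneg.2 hx.1)] at this
    exact this.trans (by gcongr; exact hx.2)
  obtain ⟨G, hG, φ, hφ, hlim⟩ := exists_subseq_tendsto_of_lipschitz hAB
    (F := fun k x => (Y k x, V k x)) (z := 0) (M := max η (M * (C * η) * (B - A)))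
    (L := max (NNReal.mk (1 + C * η * (B - A)) (by positivity))
      (NNReal.mk (M * (C * η)) (by positivity)))
    (fun k x hx => mem_closedBall_zero_iff.2 (max_le_max (hY k x hx) (hVle k x hx)))
    (fun k => LipschitzOnWith.prodMk
      (LipschitzOnWith.of_dist_le_mul fun x hx x' hx' => (hs k).abs_profile_sub_le (hψ k).abs_le hh
        (hw k).monotoneOn (hw k).left_pos.le hx' hx)
      (LipschitzOnWith.of_dist_le_mul fun x hx x' hx' => hVlip k x' hx' x hx))
  refine ⟨fun x => (G x).1, fun x => (G x).2, ?_, φ, hφ,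
    fun x hx => ⟨(hlim x hx).fst_nhds, (hlim x hx).snd_nhds⟩⟩
  exact IsSol.of_tendsto hAB (fun k => hψ (φ k)) hψ₀
    (fun s => (hψt s).comp (hφ.tendsto_atTop.prodMap tendsto_id)) hh (fun k => hw (φ k)) hw₀ hw₀'
    (fun x hx => (hwt x hx).comp hφ.tendsto_atTop) (fun k => hs (φ k)) hG.fst hG.snd
    (fun x hx => (hlim x hx).fst_nhds) (fun x hx => (hlim x hx).snd_nhds)

theorem exists_shooting_regPow (hα : 0 < α) (hα1 : α < 1) (n : ℕ) (hA : 0 ≤ A) (hAR : A < R)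
    (hRB : R ≤ B) (hh : IsRestoring h C c η) (hd : 0 < d) (hdη : C * d ^ 2 ≤ c * η ^ 2) :
    ∃ d' ∈ Ioc 0 d, ∃ κ ∈ Ioc (0 : ℝ) 1, ∀ ε ∈ Ioc 0 κ, ∃ y v,
      IsSol (regPow α ε) h (fun x => (x + ε) ^ n) A B y v ∧ y A ∈ Icc d' d ∧ v R = 0 := by
  have hB : 0 < B + 1 := by linarith
  obtain ⟨X, hX⟩ := exists_shooting hAR hRB hh (w₀ := fun x => x ^ n) (M := (B + 1) ^ n)
    (fun x hx => pow_pos (hA.trans_lt hx.1) n) (by positivity) hd hdη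
  obtain ⟨κ, hκ, hsteep⟩ := exists_mul_sq_le_mul_regPow hα1 X
  obtain ⟨d', hd', hshoot⟩ := hX κ hκ
  refine ⟨d', hd', min κ 1, ⟨lt_min hκ one_pos, min_le_right _ _⟩, fun ε hε => ?_⟩
  exact hshoot _ _ (isFluxLaw_regPow hα hα1.le hε.1.ne') (contDiff_regPow α hε.1.ne')
    (hsteep ε ⟨hε.1, hε.2.trans (min_le_left _ _)⟩)
    (isWeightBetween_add_pow hA ⟨hε.1, hε.2.trans (min_le_right _ _)⟩ n)

theorem exists_isSol_flux_eq_zero (hα : 0 < α) (hα1 : α < 1) (n : ℕ) (hA : 0 ≤ A) (hAR : A < R)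
    (hRB : R ≤ B) (hh : IsRestoring h C c η) (hd : 0 < d) (hdη : C * d ^ 2 ≤ c * η ^ 2) :
    ∃ y v, IsSol (regPow α 0) h (fun x => x ^ n) A B y v ∧ y A ∈ Ioc 0 d ∧ v R = 0 ∧
      ∀ x ∈ Icc A B, |y x| ≤ η := by
  have hAB := hAR.le.trans hRB
  obtain ⟨d', hd', κ, hκ, hshoot⟩ := exists_shooting_regPow hα hα1 n hA hAR hRB hh hd hdη
  obtain ⟨e, -, he, het⟩ := exists_seq_strictAnti_tendsto' hκ.1
  choose Y V hs hYA hVR using fun k => hshoot (e k) (Ioo_subset_Ioc_self (he k))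
  have hψ : ∀ k, IsFluxLaw (regPow α (e k)) := fun k =>
    isFluxLaw_regPow hα hα1.le (he k).1.ne'
  have hw : ∀ k, IsWeightBetween (fun x => x ^ n) ((B + 1) ^ n) (fun x => (x + e k) ^ n) A B :=
    fun k => isWeightBetween_add_pow hA ⟨(he k).1, (he k).2.le.trans hκ.2⟩ n
  have hYη : ∀ k, ∀ x ∈ Icc A B, |Y k x| ≤ η := fun k x hx => by
    have hpos : 0 ≤ Y k A := hd'.1.le.trans (hYA k).1
    exact (hs k).abs_profile_le (hψ k) hh (hw k).toIsWeight
      (le_trans (by gcongr; exact (hYA k).2) hdη) hx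
  have hψt : ∀ s, Tendsto (Function.uncurry fun k => regPow α (e k)) (atTop ×ˢ 𝓝 s)
      (𝓝 (regPow α 0 s)) := fun s => by
    have hcont := (continuous_regPow_uncurry hα hα1.le).tendsto (0, s)
    rw [nhds_prod_eq] at hcont
    exact hcont.comp (het.prodMap tendsto_id)
  obtain ⟨y, v, hsol, φ, -, hlim⟩ := exists_subseq_tendsto_isSol hAB hψ
    (continuous_regPow hα hα1.le 0) hψt hh hw (by fun_prop)
    (fun x hx => pow_pos (hA.trans_lt hx.1) n)
    (fun x _ => by simpa using (tendsto_const_nhds.add het).pow n) hs hYη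
  have hYlim := (hlim A (left_mem_Icc.2 hAB)).1
  refine ⟨y, v, hsol, ⟨hd'.1.trans_le ?_, ?_⟩, ?_, fun x hx => ?_⟩
  · exact ge_of_tendsto' hYlim fun k => (hYA _).1
  · exact le_of_tendsto' hYlim fun k => (hYA _).2
  · exact tendsto_nhds_unique (hlim R ⟨hAR.le, hRB⟩).2 (by simp [hVR])
  · exact le_of_tendsto' (hlim x hx).1.abs fun k => hYη _ x hx

end Limit

section Neumann

variable {f g : ℝ → ℝ} {p e m δ A B R c η : ℝ} {C : ℝ≥0} {n : ℕ}

theorem exists_abs_sub_sub_mul_le_of_hasStrictDerivAt (hg : HasStrictDerivAt g m 0) (hc : 0 < c)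
    (hδ : 0 < δ) :
    ∃ η ∈ Ioo 0 δ, ∀ x y, |x| ≤ η → |y| ≤ η → |g x - g y - (x - y) * m| ≤ c * |x - y| := by
  have hsmall := hg.isLittleO.def hc
  rw [← Prod.zero_eq_mk, Metric.eventually_nhds_iff] at hsmall
  obtain ⟨ρ, hρ, hball⟩ := hsmall
  obtain ⟨η, hη, hηlt⟩ := exists_between (lt_min hδ hρ)
  refine ⟨η, ⟨hη, hηlt.trans_le (min_le_left _ _)⟩, fun x y hx hy => hball (y := (x, y)) ?_⟩
  rw [dist_zero_right, Prod.norm_def]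
  exact (max_le hx hy).trans_lt (hηlt.trans_le (min_le_right _ _))

theorem exists_isRestoring_comp_clamp (hg : HasStrictDerivAt g m 0) (hg0 : g 0 = 0) (hm : 0 < m)
    (hδ : 0 < δ) : ∃ C c, ∃ η < δ, IsRestoring (fun x => g (clamp η x)) C c η := by
  obtain ⟨η, ⟨hη, hηδ⟩, hlin⟩ :=
    exists_abs_sub_sub_mul_le_of_hasStrictDerivAt hg (half_pos hm) hδ
  have hlip : ∀ x y, |x| ≤ η → |y| ≤ η → |g x - g y| ≤ 3 * m / 2 * |x - y| := by
    intro x y hx hy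
    have := abs_sub_abs_le_abs_sub (g x - g y) ((x - y) * m)
    rw [abs_mul, abs_of_pos hm] at this
    linarith [hlin x y hx hy]
  have hclamp : ∀ x, |clamp η x| ≤ η := fun x => (abs_clamp hη.le x).trans_le (min_le_right _ _)
  have h0 : |(0 : ℝ)| ≤ η := abs_zero.trans_le hη.le
  refine ⟨NNReal.mk (3 * m / 2) (by positivity), m / 2, η, hηδ, half_pos hm, hη, ?_, ?_, ?_⟩
  · refine LipschitzWith.of_dist_le_mul fun x y => (hlip _ _ (hclamp x) (hclamp y)).trans ?_
    rw [NNReal.coe_mk]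
    gcongr
    exact ((lipschitzWith_clamp η).dist_le_mul x y).trans_eq (by rw [NNReal.coe_one, one_mul])
  · intro x
    simpa [hg0, abs_clamp hη.le] using hlip _ 0 (hclamp x) h0
  · intro x
    have herr : |x * (g (clamp η x) - clamp η x * m)| ≤ m / 2 * (x * clamp η x) := by
      rw [mul_clamp hη.le, ← abs_clamp hη.le, abs_mul, ← mul_assoc, mul_comm |x|]
      gcongr
      simpa [hg0] using hlin _ 0 (hclamp x) h0
    rw [← mul_clamp hη.le]
    linear_combination neg_le_of_abs_le herr

theorem IsRestoring.exists_mul_sq_le {h : ℝ → ℝ} (hh : IsRestoring h C c η) (hδ : 0 < δ) :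
    ∃ d ∈ Ioo 0 δ, C * d ^ 2 ≤ c * η ^ 2 := by
  have hc := hh.c_pos
  have hC := hh.C_pos
  have hη := hh.η_pos
  refine ⟨min (δ / 2) (√(c / C) * η), ⟨by positivity, ?_⟩, ?_⟩
  · exact (min_le_left _ _).trans_lt (half_lt_self hδ)
  · calc C * min (δ / 2) (√(c / C) * η) ^ 2 ≤ C * (√(c / C) * η) ^ 2 := by
          gcongr
          exact min_le_right _ _
      _ = c * η ^ 2 := by rw [mul_pow, Real.sq_sqrt (by positivity)]; field_simp

theorem hasDerivAt_comp_max {y y' : ℝ → ℝ}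
    (hy : ∀ x ∈ Icc A B, HasDerivWithinAt y (y' x) (Icc A B) x) (hA : y' A = 0) {x : ℝ}
    (hx : x ∈ Ico A B) : HasDerivAt (fun x => y (max A x)) (y' x) x := by
  rcases hx.1.eq_or_lt with rfl | hlt
  · have hright : HasDerivWithinAt (fun x => y (max A x)) (y' A) (Ici A) A :=
      ((hy A (Ico_subset_Icc_self hx)).mono_of_mem_nhdsWithin (Icc_mem_nhdsGE hx.2)).congr
        (fun t ht => by rw [max_eq_right ht]) (by rw [max_self])
    have hleft : HasDerivWithinAt (fun x => y (max A x)) (y' A) (Iic A) A := by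
      rw [hA]
      exact (hasDerivWithinAt_const A (Iic A) (y A)).congr
        (fun t ht => by rw [max_eq_left ht]) (by rw [max_self])
    simpa only [Iic_union_Ici, hasDerivWithinAt_univ] using hleft.union hright
  · refine ((hy x (Ico_subset_Icc_self hx)).hasDerivAt
      (Icc_mem_nhds hlt hx.2)).congr_of_eventuallyEq ?_
    filter_upwards [Ioi_mem_nhds hlt] with t ht
    rw [max_eq_right (mem_Ioi.1 ht).le]

theorem IsSol.hasDerivAt_comp_max {ψ h w y v : ℝ → ℝ} {x : ℝ} (hs : IsSol ψ h w A B y v)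
    (hψ : ψ 0 = 0) (hx : x ∈ Ico A B) :
    HasDerivAt (fun x => y (max A x)) (ψ (v x / w x)) x :=
  _root_.hasDerivAt_comp_max hs.profile (by rw [hs.flux_left, zero_div, hψ]) hx

theorem IsSol.pow_mul_phip {ψ h y v : ℝ → ℝ} {x : ℝ} (hs : IsSol ψ h (fun x => x ^ n) A B y v)
    (hp : 1 < p) (hA : 0 ≤ A) (hx : A ≤ x) :
    x ^ n * phip p (regPow (1 / (p - 1)) 0 (v x / x ^ n)) = v x := by
  rw [phip_regPow hp]
  rcases hx.eq_or_lt with rfl | hlt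
  · rw [hs.flux_left, zero_div, mul_zero]
  · exact mul_div_cancel₀ _ (pow_pos (hA.trans_lt hlt) n).ne'

theorem IsSol.continuousOn_slope {ψ h y v : ℝ → ℝ} (hs : IsSol ψ h (fun x => x ^ n) A B y v)
    (hh : IsRestoring h C c η) (hA : 0 ≤ A) : ContinuousOn (fun x => v x / x ^ n) (Icc A B) :=
  continuousOn_div_of_abs_le hs.continuousOn_flux (by fun_prop)
    (fun x hx => (pow_pos (hA.trans_lt hx.1) n).ne')
    fun x hx => hs.abs_slope_le (pow_left_monotoneOn.mono fun t ht => hA.trans ht.1)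
      (pow_nonneg hA n) (fun t _ => hh.abs_le_const _) hx

theorem IsSol.neumannSol {h y v : ℝ → ℝ} (hp : 2 < p) (hA : 0 ≤ A) (hAR : A ≤ R) (hRB : R < B)
    (hh : IsRestoring h C c η)
    (hs : IsSol (regPow (1 / (p - 1)) 0) h (fun x => x ^ n) A B y v) (hvR : v R = 0)
    (hf : ∀ x ∈ Icc A R, h (y x) = f (e + y x)) (hpos : ∀ x ∈ Icc A R, 0 < e + y x) :
    NeumannSol p (n + 1) A R f fun x => e + y (max A x) := by
  set ψ := regPow (1 / (p - 1)) 0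
  have hp1 : 0 < p - 1 := by linarith
  have hψ : Continuous ψ := continuous_regPow (by positivity)
    (by rw [div_le_one hp1]; linarith) 0
  have hψ0 : ψ 0 = 0 := zero_mul _
  set u : ℝ → ℝ := fun x => e + y (max A x)
  have hu : ∀ x ∈ Ico A B, HasDerivAt u (ψ (v x / x ^ n)) x :=
    fun x hx => (hs.hasDerivAt_comp_max hψ0 hx).const_add e
  have hueq : ∀ x ∈ Icc A R, u x = e + y x := fun x hx => by simp only [u, max_eq_right hx.1]
  have hflux : ∀ x ∈ Ico A B, x ^ n * phip p (deriv u x) = v x := fun x hx => by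
    rw [(hu x hx).deriv, hs.pow_mul_phip (by linarith) hA hx.1]
  have hIco : ∀ x ∈ Icc A R, x ∈ Ico A B := fun x hx => ⟨hx.1, hx.2.trans_lt hRB⟩
  have hsub : Icc A R ⊆ Icc A B := Icc_subset_Icc_right hRB.le
  refine ⟨fun x hx => (hu x (hIco x hx)).differentiableAt, ?_,
    fun x hx => (hpos x hx).trans_eq (hueq x hx).symm, ?_, ?_, ?_, fun x hx => ?_⟩
  · exact (hψ.comp_continuousOn ((hs.continuousOn_slope hh hA).mono hsub)).congr
      fun x hx => (hu x (hIco x hx)).deriv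
  · rw [(hu A ⟨le_rfl, hAR.trans_lt hRB⟩).deriv, hs.flux_left, zero_div, hψ0]
  · rw [(hu R ⟨hAR, hRB⟩).deriv, hvR, zero_div, hψ0]
  · exact (hs.continuousOn_flux.mono hsub).congr fun x hx => hflux x (hIco x hx)
  · have hx' : x ∈ Icc A R := Ioc_subset_Icc_self hx
    have hxB : x < B := hx.2.trans_lt hRB
    have hev : (fun t => t ^ n * phip p (deriv u t)) =ᶠ[𝓝 x] v := by
      filter_upwards [Ioo_mem_nhds hx.1 hxB] with t ht using hflux t (Ioo_subset_Ico_self ht)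
    refine (((hs.flux x (hsub hx')).hasDerivAt
      (Icc_mem_nhds hx.1 hxB)).congr_of_eventuallyEq hev).congr_deriv ?_
    rw [hueq x hx', hf x hx', neg_mul, Nat.add_sub_cancel]

theorem NeumannSol.nonConstOn {N : ℕ} {u : ℝ → ℝ} (hu : NeumannSol p N A B f u) (hA : 0 ≤ A)
    (hAB : A < B) (hf : f (u A) ≠ 0) : NonConstOn A B u := by
  by_contra hcon
  have hconst : ∀ x ∈ Icc A B, u x = u A := fun x hx => by
    by_contra hne
    exact hcon ⟨x, hx, A, left_mem_Icc.2 hAB.le, hne⟩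
  have hderiv : ∀ t ∈ Ioo A B, deriv u t = 0 := fun t ht => by
    have : u =ᶠ[𝓝 t] fun _ => u A := by
      filter_upwards [Icc_mem_nhds ht.1 ht.2] with s hs using hconst s hs
    rw [this.deriv_eq, deriv_const]
  obtain ⟨x, hx⟩ := exists_between hAB
  have hflux : (fun t => t ^ (N - 1) * phip p (deriv u t)) =ᶠ[𝓝 x] fun _ => 0 := by
    filter_upwards [Ioo_mem_nhds hx.1 hx.2] with t ht
    rw [hderiv t ht, phip, mul_zero, mul_zero]
  obtain ⟨-, -, -, -, -, -, hode⟩ := hu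
  have hzero := (hode x ⟨hx.1, hx.2.le⟩).unique
    ((hasDerivAt_const x (0 : ℝ)).congr_of_eventuallyEq hflux)
  rw [hconst x ⟨hx.1.le, hx.2.le⟩] at hzero
  exact mul_ne_zero (neg_ne_zero.2 (pow_pos (hA.trans_lt hx.1) _).ne') hf hzero

theorem exists_neumannSol_of_isSol {y v : ℝ → ℝ} (hp : 2 < p) (hA : 0 ≤ A) (hAR : A < R)
    (hRB : R < B) (hηe : η < e) (hh : IsRestoring (fun x => f (e + clamp η x)) C c η)
    (hs : IsSol (regPow (1 / (p - 1)) 0) (fun x => f (e + clamp η x)) (fun x => x ^ n) A B y v)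
    (hvR : v R = 0) (hyA : y A ≠ 0) (hyη : ∀ x ∈ Icc A R, |y x| ≤ η) :
    ∃ u, NeumannSol p (n + 1) A R f u ∧ NonConstOn A R u ∧ u A = e + y A := by
  have hf : ∀ x ∈ Icc A R, f (e + clamp η (y x)) = f (e + y x) := fun x hx => by
    rw [clamp_of_abs_le (hyη x hx)]
  have hA' : A ∈ Icc A R := left_mem_Icc.2 hAR.le
  have hu := hs.neumannSol hp hA hAR.le hRB hh hvR hf fun x hx => by
    linarith [neg_le_of_abs_le (hyη x hx)]
  have huA : e + y (max A A) = e + y A := by rw [max_self]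
  refine ⟨_, hu, hu.nonConstOn hA hAR fun hfA => ?_, huA⟩
  rw [huA, ← hf A hA'] at hfA
  have hle := hh.mul_sq_le (hyη A hA')
  rw [hfA, mul_zero] at hle
  have := hh.c_pos
  exact absurd hle (not_le.2 (by positivity))

theorem exists_neumannSol_near (hp : 2 < p) (n : ℕ) (hA : 0 ≤ A) (hAR : A < R) (he : 0 < e)
    (hf : HasStrictDerivAt f m e) (hfe : f e = 0) (hm : 0 < m) (hδ : 0 < δ) :
    (∃ u, NeumannSol p (n + 1) A R f u ∧ NonConstOn A R u ∧ u A ∈ Ioo e (e + δ)) ∧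
      ∃ u, NeumannSol p (n + 1) A R f u ∧ NonConstOn A R u ∧ u A ∈ Ioo (e - δ) e := by
  have hp1 : 0 < p - 1 := by linarith
  have hα : 0 < 1 / (p - 1) := by positivity
  have hα1 : 1 / (p - 1) < 1 := by rw [div_lt_one hp1]; linarith
  have hg : HasStrictDerivAt (fun x => f (e + x)) m 0 :=
    (HasStrictDerivAt.comp (h₂ := f) 0 (by rwa [id, add_zero])
      ((hasStrictDerivAt_id 0).const_add e)).congr_deriv (mul_one m)
  obtain ⟨C, c, η, hηe, hh⟩ := exists_isRestoring_comp_clamp hg (by rwa [add_zero]) hm he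
  obtain ⟨d, hd, hdη⟩ := hh.exists_mul_sq_le hδ
  have hRB : R < R + 1 := lt_add_one R
  have hsub : Icc A R ⊆ Icc A (R + 1) := Icc_subset_Icc_right hRB.le
  constructor
  · obtain ⟨y, v, hs, hyA, hvR, hyη⟩ :=
      exists_isSol_flux_eq_zero hα hα1 n hA hAR hRB.le hh hd.1 hdη
    obtain ⟨u, hu, hnc, huA⟩ := exists_neumannSol_of_isSol hp hA hAR hRB hηe hh hs hvR hyA.1.ne'
      fun x hx => hyη x (hsub hx)
    exact ⟨u, hu, hnc, by rw [huA]; constructor <;> linarith [hyA.1, hyA.2, hd.2]⟩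
  · obtain ⟨y, v, hs, hyA, hvR, hyη⟩ :=
      exists_isSol_flux_eq_zero hα hα1 n hA hAR hRB.le hh.neg hd.1 hdη
    obtain ⟨u, hu, hnc, huA⟩ := exists_neumannSol_of_isSol hp hA hAR hRB hηe hh
      (hs.neg (regPow_neg _ _)) (by rw [hvR, neg_zero]) (neg_ne_zero.2 hyA.1.ne')
      fun x hx => (abs_neg _).trans_le (hyη x (hsub hx))
    exact ⟨u, hu, hnc, by rw [huA]; constructor <;> linarith [hyA.1, hyA.2, hd.2]⟩

theorem infinite_image_domRestrict {S : Set (ℝ → ℝ)} (hAB : A ≤ B)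
    (hS : ∃ᶠ d in 𝓝[≠] e, ∃ u ∈ S, u A = d) :
    ((fun u : ℝ → ℝ => (Icc A B).domRestrict u) '' S).Infinite := by
  have hinf : ((fun u : ℝ → ℝ => u A) '' S).Infinite :=
    frequently_cofinite_iff_infinite.1 (hS.filter_mono (nhdsNE_le_cofinite e))
  refine Set.Infinite.of_image (fun w => w ⟨A, left_mem_Icc.2 hAB⟩) ?_
  rwa [image_image]

end Neumann

theorem stmt3_general (p : ℝ) (hp : 2 < p) (N : ℕ) (hN : 1 ≤ N)
    (R1 R2 : ℝ) (hR1 : 0 ≤ R1) (hR12 : R1 < R2) (f : ℝ → ℝ) (e m : ℝ) (he : 0 < e)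
    (hfe : f e = 0) (hf : HasStrictDerivAt f m e) (hm : 0 < m) :
    Set.Infinite ((fun u : ℝ → ℝ => (Icc R1 R2).domRestrict u) ''
      {u : ℝ → ℝ | NeumannSol p N R1 R2 f u ∧ NonConstOn R1 R2 u ∧ e < u R1}) ∧
    Set.Infinite ((fun u : ℝ → ℝ => (Icc R1 R2).domRestrict u) ''
      {u : ℝ → ℝ | NeumannSol p N R1 R2 f u ∧ NonConstOn R1 R2 u ∧ u R1 < e}) := by
  obtain ⟨n, rfl⟩ := Nat.exists_eq_add_of_le' hN
  constructor
  · refine infinite_image_domRestrict hR12.le (e := e) (.filter_mono ?_ (nhdsGT_le_nhdsNE e))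
    refine (nhdsGT_basis e).frequently_iff.2 fun {b} hb => ?_
    obtain ⟨u, hu, hnc, huA⟩ :=
      (exists_neumannSol_near hp n hR1 hR12 he hf hfe hm (sub_pos.2 hb)).1
    rw [add_sub_cancel] at huA
    exact ⟨u R1, huA, u, ⟨hu, hnc, huA.1⟩, rfl⟩
  · refine infinite_image_domRestrict hR12.le (e := e) (.filter_mono ?_ (nhdsLT_le_nhdsNE e))
    refine (nhdsLT_basis e).frequently_iff.2 fun {b} hb => ?_
    obtain ⟨u, hu, hnc, huA⟩ :=
      (exists_neumannSol_near hp n hR1 hR12 he hf hfe hm (sub_pos.2 hb)).2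
    rw [sub_sub_cancel] at huA
    exact ⟨u R1, huA, u, ⟨hu, hnc, huA.2⟩, rfl⟩

theorem stmt3 (p : ℝ) (hp : 2 < p) (N : ℕ) (hN : 1 ≤ N)
    (R1 R2 : ℝ) (hR1 : 0 ≤ R1) (hR12 : R1 < R2)
    (q r : ℝ) (hpr : p ≤ r) (hrq : r < q)
    (hsub : R1 = 0 → (q : EReal) < pstar p N) :
    Set.Infinite ((fun u : ℝ → ℝ => (Icc R1 R2).restrict u) ''
      {u : ℝ → ℝ | NeumannSol p N R1 R2 (fun s => s ^ (q - 1) - s ^ (r - 1)) u ∧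
        NonConstOn R1 R2 u ∧ 1 < u R1}) ∧
    Set.Infinite ((fun u : ℝ → ℝ => (Icc R1 R2).restrict u) ''
      {u : ℝ → ℝ | NeumannSol p N R1 R2 (fun s => s ^ (q - 1) - s ^ (r - 1)) u ∧
        NonConstOn R1 R2 u ∧ u R1 < 1}) := by
  refine stmt3_general p hp N hN R1 R2 hR1 hR12 _ 1 (q - r) one_pos (by simp) ?_ (sub_pos.2 hrq)
  simpa using (hasStrictDerivAt_rpow_const (p := q - 1) (Or.inl one_ne_zero)).fun_sub
    (hasStrictDerivAt_rpow_const (p := r - 1) (Or.inl one_ne_zero))
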